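/- arXiv:2406.11488 — 2 statements merged into one kernel-verified Lean document; each statement's English description precedes it below -/
import Mathlib

section
/- Let S and T be reversible two-way parity transducers with n and m states respectively, such that the output alphabet B of S equals the input alphabet of T. Then there exists a reversible two-way parity transducer U with at most C·n·m states (for some absolute constant C) such that ⟦U⟧ = ⟦T⟧ ∘ ⟦S⟧ as partial functions; in particular dom(U) = { u ∈ dom(S) : ⟦S⟧(u) ∈ dom(T) } and ⟦U⟧(u) = ⟦T⟧(⟦S⟧(u)) for all such u. -/
namespace Paper

/-! ## Two-way parity automata and transducers over infinite words.

An infinite word over an alphabet `A` is a function `ℕ → A`.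
A configuration `⊢ u p v` with `w = u v` is encoded as a pair `(p, |u|) : Q × ℕ`.
The left end-marker `⊢` is encoded as `(none : Option A)`. -/

/-- A two-way automaton (without acceptance condition): states `Q` partitioned into forward
states (`fwd`) and backward states, an initial forward state, and a transition relation `Δ`
over `Q × (A ∪ {⊢}) × Q` where transitions on the end-marker `⊢` (encoded `none`) go from
backward to forward states. -/
structure TwoWayAut (A : Type) where
  Q : Type
  finQ : Fintype Q
  fwd : Q → Prop
  init : Q
  init_fwd : fwd init
  Δ : Set (Q × Option A × Q)
  marker : ∀ p q, (p, (none : Option A), q) ∈ Δ → ¬ fwd p ∧ fwd q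

attribute [instance] TwoWayAut.finQ

variable {A B : Type}

/-- `StepVia M w c t c'` : from configuration `c`, using transition `t`, the automaton `M`
reaches the successor configuration `c'` on input word `w`. -/
def StepVia (M : TwoWayAut A) (w : ℕ → A) (c : M.Q × ℕ)
    (t : M.Q × Option A × M.Q) (c' : M.Q × ℕ) : Prop :=
  t ∈ M.Δ ∧ t.1 = c.1 ∧ t.2.2 = c'.1 ∧
    ((M.fwd c.1 ∧ t.2.1 = some (w c.2) ∧
        ((M.fwd c'.1 ∧ c'.2 = c.2 + 1) ∨ (¬ M.fwd c'.1 ∧ c'.2 = c.2))) ∨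
     (¬ M.fwd c.1 ∧ 0 < c.2 ∧ t.2.1 = some (w (c.2 - 1)) ∧
        ((M.fwd c'.1 ∧ c'.2 = c.2) ∨ (¬ M.fwd c'.1 ∧ c'.2 = c.2 - 1))) ∨
     (¬ M.fwd c.1 ∧ c.2 = 0 ∧ t.2.1 = none ∧ c'.2 = 0))

/-- The successor relation on configurations. -/
def Step (M : TwoWayAut A) (w : ℕ → A) (c c' : M.Q × ℕ) : Prop :=
  ∃ t, StepVia M w c t c'

/-- An infinite run of `M` on `w`, given by its configurations and the transitions taken. -/
def IsRun (M : TwoWayAut A) (w : ℕ → A) (cfg : ℕ → M.Q × ℕ)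
    (tr : ℕ → M.Q × Option A × M.Q) : Prop :=
  cfg 0 = (M.init, 0) ∧ ∀ i, StepVia M w (cfg i) (tr i) (cfg (i + 1))

/-- The run reads the whole word: the prefix lengths are unbounded. -/
def ReadsWhole (M : TwoWayAut A) (cfg : ℕ → M.Q × ℕ) : Prop :=
  ∀ n : ℕ, ∃ i, n ≤ (cfg i).2

/-- `t` occurs infinitely often in the sequence `tr`. -/
def InfOften {T : Type} (tr : ℕ → T) (t : T) : Prop :=
  ∀ n, ∃ i, n ≤ i ∧ tr i = t

def Deterministic (M : TwoWayAut A) : Prop :=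
  ∀ p a q q', (p, a, q) ∈ M.Δ → (p, a, q') ∈ M.Δ → q = q'

def Codeterministic (M : TwoWayAut A) : Prop :=
  ∀ p p' a q, (p, a, q) ∈ M.Δ → (p', a, q) ∈ M.Δ → p = p'

def Reversible (M : TwoWayAut A) : Prop :=
  Deterministic M ∧ Codeterministic M

def Oneway (M : TwoWayAut A) : Prop := ∀ q, M.fwd q

/-- A two-way parity automaton: a two-way automaton together with a finite family of
coloring functions (indexed by `CIdx`). -/
structure ParityAut (A : Type) extends TwoWayAut A where
  CIdx : Type
  finC : Fintype CIdx
  color : CIdx → (Q × Option A × Q) → ℕ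

attribute [instance] ParityAut.finC

/-- The parity acceptance condition: for every coloring function, the minimal color of the
transitions taken infinitely often is even. -/
def ParityCond (M : ParityAut A) (tr : ℕ → M.Q × Option A × M.Q) : Prop :=
  ∀ c : M.CIdx, Even (sInf {m : ℕ | ∃ t, InfOften tr t ∧ M.color c t = m})

/-- Acceptance of an infinite word by a two-way parity automaton. -/
def ParityAut.Accepts (M : ParityAut A) (w : ℕ → A) : Prop :=
  ∃ cfg tr, IsRun M.toTwoWayAut w cfg tr ∧ ReadsWhole M.toTwoWayAut cfg ∧ ParityCond M tr

/-- All colors of `M` (on its transitions) belong to `{0, …, ℓ-1}`. -/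
def ColorsLt (M : ParityAut A) (ℓ : ℕ) : Prop :=
  ∀ (c : M.CIdx) t, t ∈ M.Δ → M.color c t < ℓ

/-- `l` is a prefix of the infinite word `x`. -/
def IsPrefixOf {C : Type} (l : List C) (x : ℕ → C) : Prop :=
  ∀ (i : ℕ) (h : i < l.length), l.get ⟨i, h⟩ = x i

/-- Concatenation of the first `n` words of a sequence of finite words. -/
def prefixCat {C : Type} (f : ℕ → List C) : ℕ → List C
  | 0 => []
  | n + 1 => prefixCat f n ++ f n

/-- The concatenation of the sequence of finite words `f` is the infinite word `x`. -/
def FlattenTo {C : Type} (f : ℕ → List C) (x : ℕ → C) : Prop :=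
  (∀ n, IsPrefixOf (prefixCat f n) x) ∧ ∀ m, ∃ n, m ≤ (prefixCat f n).length

/-- A two-way parity transducer: a two-way parity automaton (whose underlying automaton is
required to be deterministic via hypotheses) together with an output function. -/
structure TwoWayTrans (A B : Type) extends ParityAut A where
  out : (Q × Option A × Q) → List B

/-- `T.Realizes w x` : the word `w` is accepted by (the deterministic transducer) `T`,
the produced output is infinite and equals `x`.  This is the graph of the partial function
`⟦T⟧ : A^ω ⇀ B^ω`. -/
def TwoWayTrans.Realizes (T : TwoWayTrans A B) (w : ℕ → A) (x : ℕ → B) : Prop :=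
  ∃ cfg tr, IsRun T.toTwoWayAut w cfg tr ∧ ReadsWhole T.toTwoWayAut cfg ∧
    ParityCond T.toParityAut tr ∧ FlattenTo (fun i => T.out (tr i)) x

/-- A two-way Büchi transducer: accepting transitions `acc` instead of coloring functions. -/
structure BuchiTrans (A B : Type) extends TwoWayAut A where
  acc : Set (Q × Option A × Q)
  out : (Q × Option A × Q) → List B

def BuchiTrans.Realizes (T : BuchiTrans A B) (w : ℕ → A) (x : ℕ → B) : Prop :=
  ∃ cfg tr, IsRun T.toTwoWayAut w cfg tr ∧ ReadsWhole T.toTwoWayAut cfg ∧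
    (∀ n, ∃ i, n ≤ i ∧ tr i ∈ T.acc) ∧ FlattenTo (fun i => T.out (tr i)) x

/-- A two-way transducer with no acceptance condition. -/
structure NoAccTrans (A B : Type) extends TwoWayAut A where
  out : (Q × Option A × Q) → List B

def NoAccTrans.Realizes (T : NoAccTrans A B) (w : ℕ → A) (x : ℕ → B) : Prop :=
  ∃ cfg tr, IsRun T.toTwoWayAut w cfg tr ∧ ReadsWhole T.toTwoWayAut cfg ∧
    FlattenTo (fun i => T.out (tr i)) x

/-! ## One-way parity automata, transducers, and copyless parity streaming string
transducers.  A one-way automaton has only forward states and never reads the end-marker,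
so we use a simplified (equivalent) presentation. -/

structure OnewayAut (A : Type) where
  Q : Type
  finQ : Fintype Q
  init : Q
  Δ : Set (Q × A × Q)
  CIdx : Type
  finC : Fintype CIdx
  color : CIdx → (Q × A × Q) → ℕ

attribute [instance] OnewayAut.finQ
attribute [instance] OnewayAut.finC

def OnewayDet (M : OnewayAut A) : Prop :=
  ∀ p a q q', (p, a, q) ∈ M.Δ → (p, a, q') ∈ M.Δ → q = q'

def OnewayRun (M : OnewayAut A) (w : ℕ → A) (s : ℕ → M.Q) : Prop :=
  s 0 = M.init ∧ ∀ i, (s i, w i, s (i + 1)) ∈ M.Δ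

def OnewayParityCond (M : OnewayAut A) (tr : ℕ → M.Q × A × M.Q) : Prop :=
  ∀ c : M.CIdx, Even (sInf {m : ℕ | ∃ t, InfOften tr t ∧ M.color c t = m})

def OnewayAut.Accepts (M : OnewayAut A) (w : ℕ → A) : Prop :=
  ∃ s, OnewayRun M w s ∧ OnewayParityCond M (fun i => (s i, w i, s (i + 1)))

def OnewayColorsLt (M : OnewayAut A) (ℓ : ℕ) : Prop :=
  ∀ (c : M.CIdx) t, t ∈ M.Δ → M.color c t < ℓ

/-- A one-way (deterministic) parity transducer. -/
structure OnewayTrans (A B : Type) extends OnewayAut A where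
  out : (Q × A × Q) → List B

def OnewayTrans.Realizes (T : OnewayTrans A B) (w : ℕ → A) (x : ℕ → B) : Prop :=
  ∃ s, OnewayRun T.toOnewayAut w s ∧
    OnewayParityCond T.toOnewayAut (fun i => (s i, w i, s (i + 1))) ∧
    FlattenTo (fun i => T.out (s i, w i, s (i + 1))) x

/-- Number of occurrences of `a` in the list `l` (classically). -/
noncomputable def occ {C : Type} (a : C) (l : List C) : ℕ :=
  l.countP fun x => @decide (x = a) (Classical.propDecidable _)

/-- A substitution `σ : R → (R ⊎ B)*` is copyless if every register occurs at most once in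
the concatenation of all the `σ r'`. -/
def Copyless {R C : Type} [Fintype R] (σ : R → List (R ⊕ C)) : Prop :=
  ∀ r : R, (∑ r' : R, occ (Sum.inl r) (σ r')) ≤ 1

/-- Applying an assignment `ν : R → B*` (extended to a morphism `(R ⊎ B)* → B*`). -/
def subApply {R C : Type} (ν : R → List C) : List (R ⊕ C) → List C
  | [] => []
  | Sum.inl r :: l => ν r ++ subApply ν l
  | Sum.inr b :: l => b :: subApply ν l

/-- A copyless parity streaming string transducer: a (deterministic) one-way parity
automaton with a finite set `R` of registers, a distinguished output register, and copyless
register updates, where the update of `outReg` always starts with `outReg`. -/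
structure CPSST (A B : Type) extends OnewayAut A where
  R : Type
  finR : Fintype R
  outReg : R
  upd : (Q × A × Q) → R → List (R ⊕ B)
  copyless : ∀ t, @Copyless R B finR (upd t)
  out_form : ∀ t, ∃ γ, upd t outReg = Sum.inl outReg :: γ

attribute [instance] CPSST.finR

/-- The register contents along a run: `ν_0 r = ε` and `ν_{i+1} = ν_i ∘ λ(t_i)`. -/
def regVal (T : CPSST A B) (w : ℕ → A) (s : ℕ → T.Q) : ℕ → T.R → List B
  | 0 => fun _ => []
  | i + 1 => fun r => subApply (regVal T w s i) (T.upd (s i, w i, s (i + 1)) r)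

/-- `T.Realizes w x` : the (deterministic) CPSST `T` has an accepting run on `w` whose
output-register contents are unbounded with limit `x`. -/
def CPSST.Realizes (T : CPSST A B) (w : ℕ → A) (x : ℕ → B) : Prop :=
  ∃ s, OnewayRun T.toOnewayAut w s ∧
    OnewayParityCond T.toOnewayAut (fun i => (s i, w i, s (i + 1))) ∧
    (∀ i, IsPrefixOf (regVal T w s i T.outReg) x) ∧
    (∀ m, ∃ i, m ≤ (regVal T w s i T.outReg).length)

/-- The one-way parity transducer with the same underlying automaton as the CPSST `T`,
which outputs on each transition the (copyless) substitution that `T` applies. -/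
def enrich (T : CPSST A B) :
    OnewayTrans A {σ : T.R → List (T.R ⊕ B) // Copyless σ} where
  toOnewayAut := T.toOnewayAut
  out := fun t => [⟨T.upd t, T.copyless t⟩]

/-! ## Merging forests -/

/-- A merging forest on `(Q⁺ ⊎ Q⁻, χ, ℓ)`: a finite rooted forest (given by a `parent` map
with no cycles) whose leaves (childless nodes) are injectively labeled in `Q⁻` and carry a
`χ`-tuple of integers `< ℓ`, whose roots are injectively labeled in `Q⁺`, and in which every
unary node (exactly one child) is a root. -/
structure MForest (Qp Qm χ : Type) (ℓ : ℕ) where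
  V : Type
  finV : Fintype V
  parent : V → Option V
  acyc : ∀ v : V, ¬ Relation.TransGen (fun a b => parent a = some b) v v
  leafLab : V → Qm
  rootLab : V → Qp
  tup : V → χ → ℕ
  tup_lt : ∀ v, (∀ u, parent u ≠ some v) → ∀ c, tup v c < ℓ
  leaf_inj : ∀ u v, (∀ u', parent u' ≠ some u) → (∀ v', parent v' ≠ some v) →
    leafLab u = leafLab v → u = v
  root_inj : ∀ u v, parent u = none → parent v = none → rootLab u = rootLab v → u = v
  unary_root : ∀ v : V, (∃! u, parent u = some v) → parent v = none

attribute [instance] MForest.finV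

/-- Isomorphism of merging forests: a bijection of the nodes commuting with `parent` and
preserving the leaf labels, the leaf tuples and the root labels. -/
def MFIso {Qp Qm χ : Type} {ℓ : ℕ} (F G : MForest Qp Qm χ ℓ) : Prop :=
  ∃ e : F.V ≃ G.V,
    (∀ v, G.parent (e v) = Option.map e (F.parent v)) ∧
    (∀ v, (∀ u, F.parent u ≠ some v) →
      F.leafLab v = G.leafLab (e v) ∧ ∀ c, F.tup v c = G.tup (e v) c) ∧
    (∀ v, F.parent v = none → F.rootLab v = G.rootLab (e v))

end Paper

namespace Paper

/-! ## Generic material: paths in labelled transition systems -/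

/-- `Path R c ts d`: there is an `R`-path from `c` to `d` labelled by `ts`. -/
def Path {X Y : Type} (R : X → Y → X → Prop) : X → List Y → X → Prop
  | c, [], d => c = d
  | c, t :: ts, d => ∃ e, R c t e ∧ Path R e ts d

theorem Path.append {X Y : Type} {R : X → Y → X → Prop} {c d e : X} {l l' : List Y}
    (h : Path R c l d) (h' : Path R d l' e) : Path R c (l ++ l') e := by
  induction l generalizing c with
  | nil => cases h; exact h'
  | cons t ts ih =>
    obtain ⟨f, hf, hp⟩ := h
    exact ⟨f, hf, ih hp⟩

theorem Path.snoc {X Y : Type} {R : X → Y → X → Prop} {c d e : X} {l : List Y} {t : Y}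
    (h : Path R c l d) (h' : R d t e) : Path R c (l ++ [t]) e :=
  h.append ⟨e, h', rfl⟩

theorem Path.split {X Y : Type} {R : X → Y → X → Prop} {c e : X} {l l' : List Y}
    (h : Path R c (l ++ l') e) : ∃ d, Path R c l d ∧ Path R d l' e := by
  induction l generalizing c with
  | nil => exact ⟨c, rfl, h⟩
  | cons t ts ih =>
    obtain ⟨f, hf, hp⟩ := h
    obtain ⟨d, h1, h2⟩ := ih hp
    exact ⟨d, ⟨f, hf, h1⟩, h2⟩

theorem Path.unsnoc {X Y : Type} {R : X → Y → X → Prop} {c e : X} {l : List Y}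
    (h : Path R c l e) (hl : 0 < l.length) :
    ∃ l' t d, l = l' ++ [t] ∧ Path R c l' d ∧ R d t e := by
  have hne : l ≠ [] := by rintro rfl; simp at hl
  rw [← List.dropLast_append_getLast hne] at h
  obtain ⟨d, h1, f, h2, h3⟩ := h.split
  cases h3
  exact ⟨_, _, d, (List.dropLast_append_getLast hne).symm, h1, h2⟩

/-- Determinism of maximal paths. -/
theorem Path.det {X Y : Type} {R : X → Y → X → Prop}
    (hR : ∀ c t t' d d', R c t d → R c t' d' → t = t' ∧ d = d')
    {c d d' : X} {l l' : List Y} (h : Path R c l d) (h' : Path R c l' d')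
    (hd : ∀ t e, ¬ R d t e) (hd' : ∀ t e, ¬ R d' t e) : l = l' ∧ d = d' := by
  induction l generalizing c l' with
  | nil =>
    cases h
    cases l' with
    | nil => exact ⟨rfl, h'⟩
    | cons t ts => obtain ⟨f, hf, _⟩ := h'; exact absurd hf (hd _ _)
  | cons t ts ih =>
    obtain ⟨f, hf, hp⟩ := h
    cases l' with
    | nil => cases h'; exact absurd hf (hd' _ _)
    | cons t' ts' =>
      obtain ⟨f', hf', hp'⟩ := h'
      obtain ⟨rfl, rfl⟩ := hR _ _ _ _ _ hf hf'
      obtain ⟨rfl, rfl⟩ := ih hp hp'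
      exact ⟨rfl, rfl⟩

theorem Path.flip {X Y : Type} {R : X → Y → X → Prop} {c d : X} {l : List Y}
    (h : Path R c l d) : Path (fun a t b => R b t a) d l.reverse c := by
  induction l generalizing c with
  | nil => cases h; exact rfl
  | cons t ts ih =>
    obtain ⟨f, hf, hp⟩ := h
    rw [List.reverse_cons]
    exact (ih hp).snoc hf

/-- Paths of a deterministic system follow its (given) run. -/
theorem Path.eq_run {X Y : Type} {R : X → Y → X → Prop}
    (hR : ∀ c t t' d d', R c t d → R c t' d' → t = t' ∧ d = d')
    {cfg : ℕ → X} {tr : ℕ → Y} (hrun : ∀ i, R (cfg i) (tr i) (cfg (i + 1)))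
    {l : List Y} {d : X} (n : ℕ) (h : Path R (cfg n) l d) :
    l = (List.range' n l.length).map tr ∧ d = cfg (n + l.length) := by
  induction l generalizing n with
  | nil => cases h; simp
  | cons t ts ih =>
    obtain ⟨f, hf, hp⟩ := h
    obtain ⟨rfl, rfl⟩ := hR _ _ _ _ _ hf (hrun n)
    obtain ⟨h1, h2⟩ := ih (n + 1) hp
    refine ⟨?_, ?_⟩
    · rw [List.length_cons, List.range'_succ, List.map_cons, ← h1]
    · rw [h2, List.length_cons]; congr 1; omega

theorem Path.take {X Y : Type} {R : X → Y → X → Prop} {c d : X} {l : List Y}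
    (h : Path R c l d) (n : ℕ) (hn : n ≤ l.length) :
    ∃ l' e, l'.length = n ∧ Path R c l' e := by
  rw [← List.take_append_drop n l] at h
  obtain ⟨e, h1, _⟩ := h.split
  exact ⟨_, e, by simp [hn], h1⟩

/-- Arbitrarily long paths in a deterministic system yield an infinite run. -/
theorem exists_run {X Y : Type} {R : X → Y → X → Prop}
    (hR : ∀ c t t' d d', R c t d → R c t' d' → t = t' ∧ d = d') (c : X)
    (h : ∀ n, ∃ l d, n ≤ List.length l ∧ Path R c l d) :
    ∃ (cfg : ℕ → X) (tr : ℕ → Y), cfg 0 = c ∧ ∀ i, R (cfg i) (tr i) (cfg (i + 1)) := by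
  have h' : ∀ n, ∃ (l : List Y) (e : X), l.length = n ∧ Path R c l e := by
    intro n
    obtain ⟨l, d, hn, hp⟩ := h n
    exact hp.take n hn
  have huniq : ∀ n (l l' : List Y) (e e' : X), l.length = n → l'.length = n →
      Path R c l e → Path R c l' e' → e = e' := by
    intro n
    induction n with
    | zero =>
      intro l l' e e' h1 h2 h3 h4
      rw [List.length_eq_zero_iff] at h1 h2
      subst h1 h2
      exact h3.symm.trans h4
    | succ n ih =>
      intro l l' e e' h1 h2 h3 h4
      obtain ⟨m, t, d, rfl, h5, h6⟩ := h3.unsnoc (by omega)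
      obtain ⟨m', t', d', rfl, h5', h6'⟩ := h4.unsnoc (by omega)
      simp at h1 h2
      have := ih _ _ _ _ h1 h2 h5 h5'
      subst this
      exact (hR _ _ _ _ _ h6 h6').2
  choose l cfg hl hp using h'
  have hstep : ∀ i, ∃ t, R (cfg i) t (cfg (i + 1)) := by
    intro i
    obtain ⟨m, t, d, hm, h5, h6⟩ := (hp (i + 1)).unsnoc (by rw [hl]; omega)
    have : d = cfg i := huniq i _ _ _ _ (by
      have := hl (i+1); rw [hm] at this; simpa using this) (hl i) h5 (hp i)
    exact ⟨t, this ▸ h6⟩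
  choose tr htr using hstep
  exact ⟨cfg, tr, huniq 0 _ [] _ _ (hl 0) rfl (hp 0) rfl, htr⟩

/-! ## Generic material: concatenations -/

theorem prefixCat_append {C : Type} (f : ℕ → List C) (n m : ℕ) :
    ∃ l, prefixCat f (n + m) = prefixCat f n ++ l := by
  induction m with
  | zero => exact ⟨[], by simp⟩
  | succ m ih =>
    obtain ⟨l, hl⟩ := ih
    exact ⟨l ++ f (n + m), by rw [← Nat.add_assoc, prefixCat, hl, List.append_assoc]⟩

theorem prefixCat_mono {C : Type} (f : ℕ → List C) :
    Monotone (fun n => (prefixCat f n).length) := by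
  intro n m h
  obtain ⟨k, rfl⟩ := Nat.exists_eq_add_of_le h
  obtain ⟨l, hl⟩ := prefixCat_append f n k
  simp [hl]

theorem prefixCat_succ_length {C : Type} (f : ℕ → List C) (n : ℕ) :
    (prefixCat f (n + 1)).length = (prefixCat f n).length + (f n).length := by
  simp [prefixCat]

theorem isPrefixOf_iff {C : Type} (l : List C) (x : ℕ → C) :
    IsPrefixOf l x ↔ l = (List.range l.length).map x := by
  constructor
  · intro h
    apply List.ext_get
    · simp
    · intro n h1 h2
      simpa using h n h1
  · intro h i hi
    have : ∀ l' : List C, l' = l → ∀ h' : i < l'.length, l.get ⟨i, hi⟩ = l'.get ⟨i, h'⟩ := by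
      rintro _ rfl _; rfl
    rw [this _ h.symm (by simpa using hi)]
    simp

theorem IsPrefixOf.of_append {C : Type} {l l' : List C} {x : ℕ → C}
    (h : IsPrefixOf (l ++ l') x) : IsPrefixOf l x := by
  intro i hi
  have := h i (by simp; omega)
  rw [← this]
  simp [List.getElem_append_left hi]

/-- Every sequence of words with unbounded total length has a limit. -/
theorem exists_flatten {C : Type} (f : ℕ → List C)
    (h : ∀ m, ∃ n, m ≤ (prefixCat f n).length) : ∃ x, FlattenTo f x := by
  choose N hN using fun m => h (m + 1)
  refine ⟨fun i => (prefixCat f (N i)).get ⟨i, hN i⟩, ?_, h⟩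
  intro n i hi
  have key : ∀ a b (ha : i < (prefixCat f a).length) (hb : i < (prefixCat f b).length), a ≤ b →
      (prefixCat f a).get ⟨i, ha⟩ = (prefixCat f b).get ⟨i, hb⟩ := by
    intro a b ha hb hab
    obtain ⟨k, rfl⟩ := Nat.exists_eq_add_of_le hab
    obtain ⟨l, hl⟩ := prefixCat_append f a k
    simp [hl, List.getElem_append_left ha]
  rcases le_total n (N i) with h' | h'
  · exact key _ _ _ _ h'
  · exact (key _ _ _ _ h').symm

theorem FlattenTo.block {C : Type} {f : ℕ → List C} {x : ℕ → C} (h : FlattenTo f x)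
    (k i : ℕ) (hi : i < (f k).length) : (f k)[i] = x ((prefixCat f k).length + i) := by
  have := h.1 (k + 1) ((prefixCat f k).length + i) (by simp [prefixCat]; omega)
  rw [← this]
  simp [prefixCat]

theorem prefixCat_flatMap {C D : Type} (f : ℕ → List C) (g : C → List D) (n : ℕ) :
    prefixCat (fun j => (f j).flatMap g) n = (prefixCat f n).flatMap g := by
  induction n with
  | zero => rfl
  | succ n ih => simp [prefixCat, ih]

theorem prefixCat_eq {C : Type} (f : ℕ → List C) (n : ℕ) :
    prefixCat f n = (List.range n).flatMap f := by
  induction n with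
  | zero => rfl
  | succ n ih => simp [prefixCat, ih, List.range_succ]

theorem flatten_comp {C D : Type} {f : ℕ → List C} {y : ℕ → C} (h : FlattenTo f y)
    (g : C → List D) (x : ℕ → D) :
    FlattenTo (fun j => (f j).flatMap g) x ↔ FlattenTo (fun i => g (y i)) x := by
  have key : ∀ n, prefixCat (fun j => (f j).flatMap g) n =
      prefixCat (fun i => g (y i)) (prefixCat f n).length := by
    intro n
    rw [prefixCat_flatMap, prefixCat_eq (fun i => g (y i))]
    conv_lhs => rw [(isPrefixOf_iff _ _).1 (h.1 n)]
    rw [List.flatMap_map]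
  constructor
  · rintro ⟨h1, h2⟩
    refine ⟨fun n => ?_, fun m => ?_⟩
    · obtain ⟨k, hk⟩ := h.2 n
      obtain ⟨r, hr⟩ := Nat.exists_eq_add_of_le hk
      have := h1 k
      rw [key, hr] at this
      obtain ⟨l, hl⟩ := prefixCat_append (fun i => g (y i)) n r
      rw [hl] at this
      exact this.of_append
    · obtain ⟨n, hn⟩ := h2 m
      exact ⟨_, by rw [key] at hn; exact hn⟩
  · rintro ⟨h1, h2⟩
    refine ⟨fun n => by rw [key]; exact h1 _, fun m => ?_⟩
    obtain ⟨n, hn⟩ := h2 m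
    obtain ⟨k, hk⟩ := h.2 n
    exact ⟨k, by rw [key]; exact hn.trans (prefixCat_mono _ hk)⟩

theorem FlattenTo.mem {C : Type} {f : ℕ → List C} {y : ℕ → C} (h : FlattenTo f y) (i : ℕ) :
    ∃ j, i < (prefixCat f (j + 1)).length ∧ y i ∈ f j := by
  have h2 : ∃ n, i + 1 ≤ (prefixCat f n).length := h.2 (i + 1)
  classical
  have hs := Nat.find_spec h2
  rcases hn : Nat.find h2 with _ | j
  · rw [hn] at hs; simp [prefixCat] at hs
  · have hm := Nat.find_min h2 (m := j) (by omega)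
    rw [hn] at hs
    refine ⟨j, hs, ?_⟩
    rw [prefixCat_succ_length] at hs
    have := h.block j (i - (prefixCat f j).length) (by omega)
    rw [show (prefixCat f j).length + (i - (prefixCat f j).length) = i by omega] at this
    rw [← this]
    exact List.getElem_mem _

/-! ## Generic material: parity conditions through frequently-statements -/

open Filter

theorem infOften_set {Y : Type} [Finite Y] (tr : ℕ → Y) (col : Y → ℕ) :
    {m : ℕ | ∃ t, InfOften tr t ∧ col t = m} = {m | ∃ᶠ i in atTop, col (tr i) = m} := by
  ext m
  simp only [Set.mem_ofPred_eq, InfOften]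
  constructor
  · rintro ⟨t, h, rfl⟩
    rw [frequently_atTop]
    intro n
    obtain ⟨i, hi, rfl⟩ := h n
    exact ⟨i, hi, rfl⟩
  · intro h
    by_contra hc
    push Not at hc
    have : ∀ t, col t = m → ∀ᶠ i in atTop, tr i ≠ t := by
      intro t ht
      by_contra hne
      apply hc t _ ht
      intro n
      rw [eventually_atTop] at hne
      push Not at hne
      obtain ⟨i, hi, h⟩ := hne n
      exact ⟨i, hi, h⟩
    have h2 : ∀ᶠ i in atTop, ∀ t, col t = m → tr i ≠ t := by
      rw [eventually_all]
      intro t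
      by_cases ht : col t = m
      · filter_upwards [this t ht] with i hi _ using hi
      · exact Eventually.of_forall (fun i h => absurd h ht)
    obtain ⟨i, h3, h4⟩ := (h.and_eventually h2).exists
    exact h4 _ h3 rfl

theorem sInf_le_iff (g : ℕ → ℕ) (K : ℕ) (hK : ∀ i, g i ≤ K) (b : ℕ) :
    sInf {m | ∃ᶠ i in atTop, g i = m} ≤ b ↔ ∃ᶠ i in atTop, g i ≤ b := by
  have key : ∀ b, (∃ᶠ i in atTop, g i ≤ b) → ∃ m ≤ b, ∃ᶠ i in atTop, g i = m := by
    intro b h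
    by_contra hc
    push Not at hc
    have h2 : ∀ᶠ i in atTop, ∀ m ∈ Set.Iic b, g i ≠ m := by
      rw [eventually_all_finite (Set.finite_Iic b)]
      intro m hm
      have := hc m hm
      simpa using this
    obtain ⟨i, h3, h4⟩ := (h.and_eventually h2).exists
    exact h4 _ h3 rfl
  constructor
  · intro h
    have hne : {m | ∃ᶠ i in atTop, g i = m}.Nonempty := by
      obtain ⟨m, _, hm⟩ := key K (Eventually.frequently (Eventually.of_forall hK))
      exact ⟨m, hm⟩
    have hm := Nat.sInf_mem hne
    exact Frequently.mono hm (fun i hi => hi.le.trans h)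
  · intro h
    obtain ⟨m, hm, h⟩ := key b h
    exact (Nat.sInf_le h).trans hm

theorem sInf_infOften_eq {Y Z : Type} [Finite Y] [Finite Z] (tr : ℕ → Y) (tr' : ℕ → Z)
    (col : Y → ℕ) (col' : Z → ℕ) (K : ℕ) (hK : ∀ t, col t ≤ K) (hK' : ∀ t, col' t ≤ K)
    (h : ∀ b < K, (∃ᶠ i in atTop, col (tr i) ≤ b) ↔ ∃ᶠ i in atTop, col' (tr' i) ≤ b) :
    sInf {m : ℕ | ∃ t, InfOften tr t ∧ col t = m} =
      sInf {m : ℕ | ∃ t, InfOften tr' t ∧ col' t = m} := by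
  rw [infOften_set, infOften_set]
  apply eq_of_forall_ge_iff
  intro b
  rw [sInf_le_iff _ K (fun i => hK _), sInf_le_iff _ K (fun i => hK' _)]
  rcases lt_or_ge b K with hb | hb
  · exact h b hb
  · constructor <;> intro _
    · exact Eventually.frequently (Eventually.of_forall (fun i => (hK' _).trans hb))
    · exact Eventually.frequently (Eventually.of_forall (fun i => (hK _).trans hb))

theorem foldr_min_le {Y : Type} (col : Y → ℕ) (K b : ℕ) (hb : b < K) (l : List Y) :
    (l.map col).foldr min K ≤ b ↔ ∃ t ∈ l, col t ≤ b := by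
  induction l with
  | nil => simpa using hb
  | cons t ts ih => simp [ih]

theorem foldr_min_le_K {Y : Type} (col : Y → ℕ) (K : ℕ) (l : List Y) :
    (l.map col).foldr min K ≤ K := by
  induction l with
  | nil => simp
  | cons t ts ih => simp [ih]

theorem freq_flatten {Y : Type} {L : ℕ → List Y} {tr : ℕ → Y} (h : FlattenTo L tr)
    (P : Y → Prop) : (∃ᶠ j in atTop, ∃ t ∈ L j, P t) ↔ ∃ᶠ i in atTop, P (tr i) := by
  rw [frequently_atTop, frequently_atTop]
  constructor
  · intro hf N
    obtain ⟨J, hJ⟩ := h.2 N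
    obtain ⟨j, hj, t, ht, hP⟩ := hf J
    obtain ⟨i, hi, rfl⟩ := List.getElem_of_mem ht
    rw [h.block] at hP
    exact ⟨_, (hJ.trans (prefixCat_mono _ hj)).trans (Nat.le_add_right _ _), hP⟩
  · intro hf N
    obtain ⟨i, hi, hP⟩ := hf (prefixCat L N).length
    obtain ⟨j, hj, hm⟩ := h.mem i
    refine ⟨j, ?_, _, hm, hP⟩
    by_contra hlt
    have := prefixCat_mono L (show j + 1 ≤ N by omega)
    simp only at this
    omega

theorem freq_cover {κ : ℕ → ℕ} (hκ : Tendsto κ atTop atTop) (P Q : ℕ → Prop)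
    (h1 : ∀ j, Q j → P (κ j)) (h2 : ∀ k, ∃ j, κ j = k ∧ (P k → Q j)) :
    (∃ᶠ j in atTop, Q j) ↔ ∃ᶠ k in atTop, P k := by
  constructor
  · intro h
    exact hκ.frequently (h.mono h1)
  · intro h
    rw [frequently_atTop] at h ⊢
    intro N
    obtain ⟨M, hM⟩ : ∃ M, ∀ j < N, κ j < M := by
      refine ⟨(Finset.range N).sup κ + 1, fun j hj => ?_⟩
      exact Nat.lt_succ_of_le (Finset.le_sup (Finset.mem_range.2 hj))
    obtain ⟨k, hk, hP⟩ := h M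
    obtain ⟨j, hj, hQ⟩ := h2 k
    refine ⟨j, ?_, hQ hP⟩
    by_contra hlt
    have := hM j (by omega)
    omega

/-! ## Two-way automata -/

/-- The input word preceded by the end-marker. -/
def mword {A : Type} (w : ℕ → A) : ℕ → Option A
  | 0 => none
  | j + 1 => some (w j)

open Classical in
theorem stepVia_iff {A : Type} (M : TwoWayAut A) (w : ℕ → A) (c : M.Q × ℕ)
    (t : M.Q × Option A × M.Q) (c' : M.Q × ℕ) :
    StepVia M w c t c' ↔ t ∈ M.Δ ∧ t.1 = c.1 ∧ t.2.2 = c'.1 ∧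
      ∃ e, t.2.1 = mword w e ∧ c.2 + 1 = (if M.fwd c.1 then e else e + 1) ∧
        c'.2 + 1 = (if M.fwd c'.1 then e + 1 else e) := by
  obtain ⟨p, a, q⟩ := t
  obtain ⟨p', i⟩ := c
  obtain ⟨q', i'⟩ := c'
  unfold StepVia
  simp only
  refine and_congr_right fun hΔ => and_congr_right fun hp => and_congr_right fun hq => ?_
  subst hp hq
  constructor
  · rintro (⟨h1, rfl, h3⟩ | ⟨h1, h2, rfl, h3⟩ | ⟨h1, rfl, rfl, rfl⟩)
    · refine ⟨i + 1, rfl, by simp [h1], ?_⟩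
      rcases h3 with ⟨h, rfl⟩ | ⟨h, rfl⟩ <;> simp [h]
    · refine ⟨i, ?_, by simp [h1], ?_⟩
      · cases i with
        | zero => omega
        | succ i => rfl
      rcases h3 with ⟨h, rfl⟩ | ⟨h, rfl⟩ <;> simp [h]
      omega
    · exact ⟨0, rfl, by simp [h1], by simp [(M.marker _ _ hΔ).2]⟩
  · rintro ⟨e, rfl, h1, h2⟩
    by_cases hp : M.fwd p <;> by_cases hq : M.fwd q <;> simp only [hp, hq, if_true, if_false] at h1 h2
    · left; subst h1; exact ⟨hp, rfl, Or.inl ⟨hq, by omega⟩⟩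
    · left; subst h1; exact ⟨hp, rfl, Or.inr ⟨hq, by omega⟩⟩
    · right
      cases e with
      | zero => right; exact ⟨hp, by omega, rfl, by omega⟩
      | succ e =>
        left
        obtain rfl : i = e + 1 := by omega
        exact ⟨hp, by omega, rfl, Or.inl ⟨hq, by omega⟩⟩
    · right
      cases e with
      | zero => omega
      | succ e =>
        left
        obtain rfl : i = e + 1 := by omega
        exact ⟨hp, by omega, rfl, Or.inr ⟨hq, by omega⟩⟩

theorem stepVia_det {A : Type} {M : TwoWayAut A} (hM : Deterministic M) (w : ℕ → A) :
    ∀ c t t' d d', StepVia M w c t d → StepVia M w c t' d' → t = t' ∧ d = d' := by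
  classical
  rintro ⟨q, i⟩ ⟨p, a, r⟩ ⟨p', a', r'⟩ ⟨s, j⟩ ⟨s', j'⟩ h h'
  rw [stepVia_iff] at h h'
  simp only at h h'
  obtain ⟨h1, rfl, rfl, e, rfl, h2, h3⟩ := h
  obtain ⟨h1', rfl, rfl, e', rfl, h2', h3'⟩ := h'
  obtain rfl : e = e' := by split_ifs at h2 h2' <;> omega
  obtain rfl := hM _ _ _ _ h1 h1'
  exact ⟨rfl, by rw [Prod.mk.injEq]; exact ⟨rfl, by omega⟩⟩

theorem stepVia_codet {A : Type} {M : TwoWayAut A} (hM : Codeterministic M) (w : ℕ → A) :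
    ∀ c t t' d d', StepVia M w d t c → StepVia M w d' t' c → t = t' ∧ d = d' := by
  classical
  rintro ⟨q, i⟩ ⟨p, a, r⟩ ⟨p', a', r'⟩ ⟨s, j⟩ ⟨s', j'⟩ h h'
  rw [stepVia_iff] at h h'
  simp only at h h'
  obtain ⟨h1, rfl, rfl, e, rfl, h2, h3⟩ := h
  obtain ⟨h1', rfl, rfl, e', rfl, h2', h3'⟩ := h'
  obtain rfl : e = e' := by split_ifs at h3 h3' <;> omega
  obtain rfl := hM _ _ _ _ h1 h1'
  exact ⟨rfl, by rw [Prod.mk.injEq]; exact ⟨rfl, by omega⟩⟩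

theorem step_pos_le {A : Type} {M : TwoWayAut A} {w : ℕ → A} {c t d}
    (h : StepVia M w c t d) : d.2 ≤ c.2 + 1 := by
  classical
  rw [stepVia_iff] at h
  obtain ⟨-, -, -, e, -, h2, h3⟩ := h
  split_ifs at h2 h3 <;> omega

theorem run_injective {A : Type} {M : TwoWayAut A} (hM : Deterministic M) {w : ℕ → A}
    {cfg : ℕ → M.Q × ℕ} {tr : ℕ → M.Q × Option A × M.Q} (hrun : IsRun M w cfg tr)
    (hw : ReadsWhole M cfg) : Function.Injective cfg := by
  have key : ∀ i n, cfg i = cfg (i + (n + 1)) → False := by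
    intro i n h
    have hper : ∀ m, cfg (i + m) = cfg (i + (n + 1) + m) := by
      intro m
      induction m with
      | zero => exact h
      | succ m ih =>
        have h1 := hrun.2 (i + m)
        have h2 := hrun.2 (i + (n + 1) + m)
        rw [← ih] at h2
        exact (stepVia_det hM w _ _ _ _ _ h1 h2).2
    have hb : ∀ m, ∃ j ≤ i + n, cfg m = cfg j := by
      intro m
      induction m using Nat.strong_induction_on with
      | _ m ih =>
        by_cases hm : m ≤ i + n
        · exact ⟨m, hm, rfl⟩
        · obtain ⟨r, rfl⟩ := Nat.exists_eq_add_of_le (show i + (n + 1) ≤ m by omega)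
          obtain ⟨j, hj, hj'⟩ := ih (i + r) (by omega)
          exact ⟨j, hj, by rw [← hper, hj']⟩
    obtain ⟨m, hm⟩ := hw ((Finset.range (i + n + 1)).sup (fun j => (cfg j).2) + 1)
    obtain ⟨j, hj, hj'⟩ := hb m
    have : (cfg j).2 ≤ (Finset.range (i + n + 1)).sup (fun j => (cfg j).2) :=
      Finset.le_sup (f := fun j => (cfg j).2) (Finset.mem_range.2 (by omega))
    rw [hj'] at hm
    omega
  intro i j h
  rcases lt_trichotomy i j with hl | hl | hl
  · obtain ⟨r, rfl⟩ := Nat.exists_eq_add_of_le hl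
    exact (key i r (by rw [h]; congr 1; omega)).elim
  · exact hl
  · obtain ⟨r, rfl⟩ := Nat.exists_eq_add_of_le hl
    exact (key j r (by rw [← h]; congr 1; omega)).elim

theorem run_tendsto {A : Type} {M : TwoWayAut A} (hM : Deterministic M) {w : ℕ → A}
    {cfg : ℕ → M.Q × ℕ} {tr : ℕ → M.Q × Option A × M.Q} (hrun : IsRun M w cfg tr)
    (hw : ReadsWhole M cfg) : Tendsto (fun i => (cfg i).2) atTop atTop := by
  have hinj := run_injective hM hrun hw
  rw [tendsto_atTop]
  intro N
  have hfin : (cfg ⁻¹' (Set.univ ×ˢ Set.Iio N)).Finite :=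
    Set.Finite.preimage hinj.injOn (Set.finite_univ.prod (Set.finite_Iio N))
  have := hfin.compl_mem_cofinite
  rw [Nat.cofinite_eq_atTop] at this
  filter_upwards [this] with i hi
  by_contra hc
  exact hi ⟨trivial, by simpa using hc⟩

theorem run_pos_le {A : Type} {M : TwoWayAut A} {w : ℕ → A} {c d : M.Q × ℕ}
    {l : List (M.Q × Option A × M.Q)}
    (h : Path (StepVia M w) c l d) : d.2 ≤ c.2 + l.length := by
  induction l generalizing c with
  | nil => cases h; simp
  | cons t ts ih =>
    obtain ⟨e, h1, h2⟩ := h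
    have := ih h2
    have := step_pos_le h1
    simp only [List.length_cons]
    omega

end Paper

namespace Paper

open Filter

/-! ## Traversals of a finite block -/

open Classical in
/-- A step of `M` inside a finite block `l` of the input. -/
def BStep {B : Type} (M : TwoWayAut B) (l : List B) (c : M.Q × ℕ)
    (t : M.Q × Option B × M.Q) (c' : M.Q × ℕ) : Prop :=
  t ∈ M.Δ ∧ t.1 = c.1 ∧ t.2.2 = c'.1 ∧ ∃ j, ∃ h : j < l.length, t.2.1 = some l[j] ∧
    c.2 = (if M.fwd c.1 then j else j + 1) ∧ c'.2 = (if M.fwd c'.1 then j + 1 else j)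

open Classical in
/-- Traversal of a block: entered in state `p`, left in state `p'`, using the transitions `π`. -/
def Trav {B : Type} (M : TwoWayAut B) (l : List B) (p : M.Q)
    (π : List (M.Q × Option B × M.Q)) (p' : M.Q) : Prop :=
  Path (BStep M l) (p, if M.fwd p then 0 else l.length) π
    (p', if M.fwd p' then l.length else 0)

theorem bstep_det {B : Type} {M : TwoWayAut B} (hM : Deterministic M) (l : List B) :
    ∀ c t t' d d', BStep M l c t d → BStep M l c t' d' → t = t' ∧ d = d' := by
  classical
  rintro ⟨q, i⟩ ⟨p, a, r⟩ ⟨p', a', r'⟩ ⟨s, j⟩ ⟨s', j'⟩ h h'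
  unfold BStep at h h'
  simp only at h h'
  obtain ⟨h1, rfl, rfl, e, he, rfl, h2, h3⟩ := h
  obtain ⟨h1', rfl, rfl, e', he', rfl, h2', h3'⟩ := h'
  obtain rfl : e = e' := by split_ifs at h2 h2' <;> omega
  obtain rfl := hM _ _ _ _ h1 h1'
  exact ⟨rfl, by rw [Prod.mk.injEq]; exact ⟨rfl, by omega⟩⟩

theorem bstep_codet {B : Type} {M : TwoWayAut B} (hM : Codeterministic M) (l : List B) :
    ∀ c t t' d d', BStep M l d t c → BStep M l d' t' c → t = t' ∧ d = d' := by
  classical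
  rintro ⟨q, i⟩ ⟨p, a, r⟩ ⟨p', a', r'⟩ ⟨s, j⟩ ⟨s', j'⟩ h h'
  unfold BStep at h h'
  simp only at h h'
  obtain ⟨h1, rfl, rfl, e, he, rfl, h2, h3⟩ := h
  obtain ⟨h1', rfl, rfl, e', he', rfl, h2', h3'⟩ := h'
  obtain rfl : e = e' := by split_ifs at h3 h3' <;> omega
  obtain rfl := hM _ _ _ _ h1 h1'
  exact ⟨rfl, by rw [Prod.mk.injEq]; exact ⟨rfl, by omega⟩⟩

open Classical in
theorem bstep_exit {B : Type} {M : TwoWayAut B} (l : List B) (p : M.Q) (t e) :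
    ¬ BStep M l (p, if M.fwd p then l.length else 0) t e := by
  rintro ⟨-, -, -, j, hj, -, h2, -⟩
  simp only at h2
  split_ifs at h2 <;> omega

open Classical in
theorem bstep_entry {B : Type} {M : TwoWayAut B} (l : List B) (p : M.Q) (t e) :
    ¬ BStep M l e t (p, if M.fwd p then 0 else l.length) := by
  rintro ⟨-, -, -, j, hj, -, -, h2⟩
  simp only at h2
  split_ifs at h2 <;> omega

theorem Trav.det {B : Type} {M : TwoWayAut B} (hM : Deterministic M) {l : List B}
    {p p' p'' : M.Q} {π π'} (h : Trav M l p π p') (h' : Trav M l p π' p'') :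
    π = π' ∧ p' = p'' := by
  have := Path.det (bstep_det hM l) h h' (bstep_exit l p') (bstep_exit l p'')
  exact ⟨this.1, (Prod.mk.inj this.2).1⟩

theorem Trav.codet {B : Type} {M : TwoWayAut B} (hM : Codeterministic M) {l : List B}
    {p p' p'' : M.Q} {π π'} (h : Trav M l p π p'') (h' : Trav M l p' π' p'') :
    p = p' := by
  have := Path.det (bstep_codet hM l) h.flip h'.flip (bstep_entry l p) (bstep_entry l p')
  exact (Prod.mk.inj this.2).1

theorem Trav.empty {B : Type} {M : TwoWayAut B} {p p' : M.Q} {π}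
    (h : Trav M [] p π p') : π = [] ∧ p = p' := by
  unfold Trav at h
  cases π with
  | nil => exact ⟨rfl, (Prod.mk.inj h).1⟩
  | cons t ts =>
    obtain ⟨e, ⟨-, -, -, j, hj, -⟩, -⟩ := h
    simp at hj

theorem bstep_lift {B : Type} {M : TwoWayAut B} {l : List B} {y : ℕ → B} {o : ℕ}
    (hl : ∀ j (h : j < l.length), l[j] = y (o + j)) {c t c'} (h : BStep M l c t c') :
    StepVia M y (c.1, o + c.2) t (c'.1, o + c'.2) := by
  classical
  rw [stepVia_iff]
  obtain ⟨h1, h2, h3, j, hj, h4, h5, h6⟩ := h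
  refine ⟨h1, h2, h3, o + j + 1, ?_, ?_, ?_⟩
  · rw [h4, hl]; rfl
  · simp only; rw [h5]; split_ifs <;> omega
  · simp only; rw [h6]; split_ifs <;> omega

theorem bpath_lift {B : Type} {M : TwoWayAut B} {l : List B} {y : ℕ → B} {o : ℕ}
    (hl : ∀ j (h : j < l.length), l[j] = y (o + j)) {c π c'} (h : Path (BStep M l) c π c') :
    Path (StepVia M y) (c.1, o + c.2) π (c'.1, o + c'.2) := by
  induction π generalizing c with
  | nil => cases h; exact rfl
  | cons t ts ih =>
    obtain ⟨e, h1, h2⟩ := h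
    exact ⟨_, bstep_lift hl h1, ih h2⟩

open Classical in
theorem run_exit {B : Type} {M : TwoWayAut B} {l : List B} {y : ℕ → B} {o : ℕ}
    (hl : ∀ j (h : j < l.length), l[j] = y (o + j)) {cfg : ℕ → M.Q × ℕ}
    {tr : ℕ → M.Q × Option B × M.Q} (hrun : ∀ i, StepVia M y (cfg i) (tr i) (cfg (i + 1)))
    (n τ : ℕ) (q : M.Q) (i : ℕ) (hi : i ≤ l.length) (hq : cfg τ = (q, o + i))
    (hn : o + l.length < (cfg (τ + n)).2) :
    ∃ m p', Path (BStep M l) (q, i) ((List.range' τ m).map tr)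
        (p', if M.fwd p' then l.length else 0) ∧
      cfg (τ + m) = (p', o + if M.fwd p' then l.length else 0) ∧
      ∀ r ≤ m, (cfg (τ + r)).2 ≤ o + l.length := by
  induction n generalizing τ q i with
  | zero => rw [Nat.add_zero, hq] at hn; simp only at hn; omega
  | succ n ih =>
    by_cases hex : i = if M.fwd q then l.length else 0
    · refine ⟨0, q, ?_, ?_, ?_⟩
      · rw [← hex]; exact rfl
      · rw [← hex]; exact hq
      · intro r hr
        obtain rfl : r = 0 := by omega
        rw [Nat.add_zero, hq]; simp only; omega
    · have hs := (stepVia_iff _ _ _ _ _).1 (hrun τ)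
      rw [hq] at hs
      obtain ⟨h1, h2, h3, e, h4, h5, h6⟩ := hs
      simp only at h5 h2
      obtain ⟨j, hj, rfl⟩ : ∃ j, j < l.length ∧ e = o + j + 1 := by
        refine ⟨e - o - 1, ?_, ?_⟩ <;> split_ifs at h5 hex <;> omega
      have hcfg : cfg (τ + 1) = ((cfg (τ + 1)).1,
          o + if M.fwd (cfg (τ + 1)).1 then j + 1 else j) := by
        refine Prod.ext rfl ?_
        simp only
        split_ifs at h6 ⊢ <;> omega
      have hb : BStep M l (q, i) (tr τ) ((cfg (τ + 1)).1,
          if M.fwd (cfg (τ + 1)).1 then j + 1 else j) := by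
        refine ⟨h1, h2, h3, j, hj, ?_, ?_, rfl⟩
        · rw [h4, hl]; rfl
        · simp only
          split_ifs at h5 ⊢ <;> omega
      obtain ⟨m, p', hp, hc, hr⟩ := ih (τ + 1) _ _ (by split_ifs <;> omega) hcfg
        (by rw [Nat.add_right_comm]; exact hn)
      refine ⟨m + 1, p', ?_, ?_, ?_⟩
      · rw [List.range'_succ, List.map_cons]
        exact ⟨_, hb, hp⟩
      · rw [← hc]; congr 1; omega
      · intro r hrm
        cases r with
        | zero => rw [Nat.add_zero, hq]; simp only; omega
        | succ r =>
          have := hr r (by omega)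
          rwa [show τ + 1 + r = τ + (r + 1) by omega] at this

/-! ## The composition -/

variable {Γ : Type}

open Classical in
/-- The data simulated by a transition of the composition: either a transition of `S` together
with a traversal by `T` of its output, or a transition of `T` on the end-marker. -/
def UData {A B Γ : Type} (S : TwoWayTrans A B) (T : TwoWayTrans B Γ)
    (t : (S.Q × T.Q) × Option A × (S.Q × T.Q))
    (σ : Option (S.Q × Option A × S.Q)) (π : List (T.Q × Option B × T.Q)) : Prop :=
  match σ with
  | some σ => σ ∈ S.Δ ∧ t.2.1 = σ.2.1 ∧ t.1.1 = (if T.fwd t.1.2 then σ.1 else σ.2.2) ∧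
      t.2.2.1 = (if T.fwd t.2.2.2 then σ.2.2 else σ.1) ∧
      Trav T.toTwoWayAut (S.out σ) t.1.2 π t.2.2.2
  | none => t.2.1 = none ∧ t.1.1 = S.init ∧ t.2.2.1 = S.init ∧
      (t.1.2, none, t.2.2.2) ∈ T.Δ ∧ π = [(t.1.2, none, t.2.2.2)]

section
variable {A B Γ : Type} {S : TwoWayTrans A B} {T : TwoWayTrans B Γ}

theorem udata_det (hS : Reversible S.toTwoWayAut) (hT : Reversible T.toTwoWayAut)
    (hS0 : ∀ q, (q, none, S.init) ∉ S.Δ) {q q' q'' : S.Q × T.Q} {a σ σ' π π'}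
    (h : UData S T (q, a, q') σ π) (h' : UData S T (q, a, q'') σ' π') :
    σ = σ' ∧ π = π' ∧ q' = q'' := by
  obtain ⟨s, p⟩ := q
  obtain ⟨s', p'⟩ := q'
  obtain ⟨s'', p''⟩ := q''
  rcases σ with _ | ⟨r, b, r'⟩ <;> rcases σ' with _ | ⟨v, d, v'⟩ <;>
    simp only [UData] at h h'
  · obtain ⟨rfl, rfl, rfl, h1, rfl⟩ := h
    obtain ⟨-, -, rfl, h2, rfl⟩ := h'
    obtain rfl := hT.1 _ _ _ _ h1 h2
    exact ⟨rfl, rfl, rfl⟩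
  · obtain ⟨rfl, rfl, rfl, h1, rfl⟩ := h
    obtain ⟨h2, rfl, h3, -⟩ := h'
    rw [if_neg (T.marker _ _ h1).1] at h3
    subst h3
    exact absurd h2 (hS0 _)
  · obtain ⟨rfl, rfl, rfl, h1, rfl⟩ := h'
    obtain ⟨h2, rfl, h3, -⟩ := h
    rw [if_neg (T.marker _ _ h1).1] at h3
    subst h3
    exact absurd h2 (hS0 _)
  · obtain ⟨h1, rfl, h2, h3, h4⟩ := h
    obtain ⟨h1', rfl, h2', h3', h4'⟩ := h'
    have : r = v ∧ r' = v' := by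
      by_cases hp : T.fwd p <;> simp only [hp, if_true, if_false] at h2 h2' <;> subst h2 h2'
      · exact ⟨rfl, hS.1 _ _ _ _ h1 h1'⟩
      · exact ⟨hS.2 _ _ _ _ h1 h1', rfl⟩
    obtain ⟨rfl, rfl⟩ := this
    obtain ⟨rfl, rfl⟩ := h4.det hT.1 h4'
    rw [h3, h3']
    exact ⟨rfl, rfl, rfl⟩

theorem udata_codet (hS : Reversible S.toTwoWayAut) (hT : Reversible T.toTwoWayAut)
    (hS0 : ∀ q, (q, none, S.init) ∉ S.Δ) {q q' q'' : S.Q × T.Q} {a σ σ' π π'}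
    (h : UData S T (q', a, q) σ π) (h' : UData S T (q'', a, q) σ' π') : q' = q'' := by
  obtain ⟨s, p⟩ := q
  obtain ⟨s', p'⟩ := q'
  obtain ⟨s'', p''⟩ := q''
  rcases σ with _ | ⟨r, b, r'⟩ <;> rcases σ' with _ | ⟨v, d, v'⟩ <;>
    simp only [UData] at h h'
  · obtain ⟨rfl, rfl, rfl, h1, rfl⟩ := h
    obtain ⟨-, rfl, -, h2, rfl⟩ := h'
    obtain rfl := hT.2 _ _ _ _ h1 h2
    rfl
  · obtain ⟨rfl, rfl, rfl, h1, rfl⟩ := h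
    obtain ⟨h2, rfl, -, h3, -⟩ := h'
    rw [if_pos (T.marker _ _ h1).2] at h3
    subst h3
    exact absurd h2 (hS0 _)
  · obtain ⟨rfl, rfl, rfl, h1, rfl⟩ := h'
    obtain ⟨h2, rfl, -, h3, -⟩ := h
    rw [if_pos (T.marker _ _ h1).2] at h3
    subst h3
    exact absurd h2 (hS0 _)
  · obtain ⟨h1, rfl, h3, h2, h4⟩ := h
    obtain ⟨h1', rfl, h3', h2', h4'⟩ := h'
    have : r = v ∧ r' = v' := by
      by_cases hp : T.fwd p <;> simp only [hp, if_true, if_false] at h2 h2' <;> subst h2 h2'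
      · exact ⟨hS.2 _ _ _ _ h1 h1', rfl⟩
      · exact ⟨rfl, hS.1 _ _ _ _ h1 h1'⟩
    obtain ⟨rfl, rfl⟩ := this
    obtain rfl := h4.codet hT.2 h4'
    rw [h3, h3']

end

/-- Color of the `S`-component. -/
def colS {A B : Type} (S : TwoWayTrans A B) (K : ℕ) (c : S.CIdx) :
    Option (S.Q × Option A × S.Q) → ℕ
  | some σ => S.color c σ
  | none => K

/-- The underlying automaton of the composition. -/
abbrev compAut {A B Γ : Type} (S : TwoWayTrans A B) (T : TwoWayTrans B Γ) : TwoWayAut A where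
  Q := S.Q × T.Q
  finQ := inferInstance
  fwd := fun q => (S.fwd q.1 ↔ T.fwd q.2)
  init := (S.init, T.init)
  init_fwd := iff_of_true S.init_fwd T.init_fwd
  Δ := {t | ∃ σ π, UData S T t σ π}
  marker := by
    rintro ⟨s, p⟩ ⟨s', p'⟩ ⟨σ, π, h⟩
    rcases σ with _ | ⟨r, b, r'⟩ <;> simp only [UData] at h
    · obtain ⟨-, rfl, rfl, h1, -⟩ := h
      have := T.marker _ _ h1
      have := S.init_fwd
      simp only
      tauto
    · obtain ⟨h1, rfl, h2, h3, -⟩ := h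
      have := S.marker _ _ h1
      simp only
      by_cases hp : T.fwd p <;> by_cases hp' : T.fwd p' <;>
        simp only [hp, hp', if_true, if_false] at h2 h3 <;> subst h2 h3 <;> tauto

open Classical in
/-- The composition. -/
noncomputable abbrev comp {A B Γ : Type} (S : TwoWayTrans A B) (T : TwoWayTrans B Γ) (K : ℕ) :
    TwoWayTrans A Γ where
  toTwoWayAut := compAut S T
  CIdx := S.CIdx ⊕ T.CIdx
  finC := inferInstance
  color := fun c t => if h : ∃ d : Option (S.Q × Option A × S.Q) × List (T.Q × Option B × T.Q),
      UData S T t d.1 d.2 then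
    match c with
    | Sum.inl c => colS S K c h.choose.1
    | Sum.inr c => (h.choose.2.map (T.color c)).foldr min K
    else 0
  out := fun t => if h : ∃ d : Option (S.Q × Option A × S.Q) × List (T.Q × Option B × T.Q),
      UData S T t d.1 d.2 then h.choose.2.flatMap T.out else []

section
variable {A B Γ : Type} {S : TwoWayTrans A B} {T : TwoWayTrans B Γ}

theorem comp_reversible (hS : Reversible S.toTwoWayAut) (hT : Reversible T.toTwoWayAut)
    (hS0 : ∀ q, (q, none, S.init) ∉ S.Δ) : Reversible (compAut S T) := by
  constructor
  · rintro p a q q' ⟨σ, π, h⟩ ⟨σ', π', h'⟩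
    exact (udata_det hS hT hS0 h h').2.2
  · rintro p p' a q ⟨σ, π, h⟩ ⟨σ', π', h'⟩
    exact udata_codet hS hT hS0 h h'

theorem udata_choose (hS : Reversible S.toTwoWayAut) (hT : Reversible T.toTwoWayAut)
    (hS0 : ∀ q, (q, none, S.init) ∉ S.Δ) {t σ π} (h : UData S T t σ π)
    (h' : ∃ d : Option (S.Q × Option A × S.Q) × List (T.Q × Option B × T.Q),
      UData S T t d.1 d.2) : h'.choose = (σ, π) := by
  obtain ⟨q, a, q'⟩ := t
  obtain ⟨h1, h2, -⟩ := udata_det hS hT hS0 h h'.choose_spec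
  exact Prod.ext h1.symm h2.symm

theorem comp_color_inl (hS : Reversible S.toTwoWayAut) (hT : Reversible T.toTwoWayAut)
    (hS0 : ∀ q, (q, none, S.init) ∉ S.Δ) (K : ℕ) {t σ π} (h : UData S T t σ π) (c) :
    (comp S T K).color (Sum.inl c) t = colS S K c σ := by
  have h' : ∃ d : Option (S.Q × Option A × S.Q) × List (T.Q × Option B × T.Q),
      UData S T t d.1 d.2 := ⟨(σ, π), h⟩
  simp only [dif_pos h', udata_choose hS hT hS0 h h']

theorem comp_color_inr (hS : Reversible S.toTwoWayAut) (hT : Reversible T.toTwoWayAut)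
    (hS0 : ∀ q, (q, none, S.init) ∉ S.Δ) (K : ℕ) {t σ π} (h : UData S T t σ π) (c) :
    (comp S T K).color (Sum.inr c) t = (π.map (T.color c)).foldr min K := by
  have h' : ∃ d : Option (S.Q × Option A × S.Q) × List (T.Q × Option B × T.Q),
      UData S T t d.1 d.2 := ⟨(σ, π), h⟩
  simp only [dif_pos h', udata_choose hS hT hS0 h h']

theorem comp_out (hS : Reversible S.toTwoWayAut) (hT : Reversible T.toTwoWayAut)
    (hS0 : ∀ q, (q, none, S.init) ∉ S.Δ) (K : ℕ) {t σ π} (h : UData S T t σ π) :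
    (comp S T K).out t = π.flatMap T.out := by
  have h' : ∃ d : Option (S.Q × Option A × S.Q) × List (T.Q × Option B × T.Q),
      UData S T t d.1 d.2 := ⟨(σ, π), h⟩
  simp only [dif_pos h', udata_choose hS hT hS0 h h']

theorem comp_color_le (K : ℕ) (hKS : ∀ c t, S.color c t ≤ K) (c t) :
    (comp S T K).color c t ≤ K := by
  simp only
  split_ifs with h
  · rcases c with c | c
    · simp only
      rcases h.choose.1 with _ | σ
      · exact le_rfl
      · exact hKS _ _
    · exact foldr_min_le_K _ _ _
  · exact Nat.zero_le _

open Classical in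
theorem ustep_some (u : ℕ → A) {t : (S.Q × T.Q) × Option A × (S.Q × T.Q)} {σ π}
    (h : UData S T t (some σ) π) (c c' : (S.Q × T.Q) × ℕ) :
    StepVia (compAut S T) u c t c' ↔ t.1 = c.1 ∧ t.2.2 = c'.1 ∧ ∃ i i',
      StepVia S.toTwoWayAut u (σ.1, i) σ (σ.2.2, i') ∧
      c.2 = (if T.fwd t.1.2 then i else i') ∧ c'.2 = (if T.fwd t.2.2.2 then i' else i) := by
  obtain ⟨⟨s, p⟩, a, ⟨s', p'⟩⟩ := t
  obtain ⟨r, b, r'⟩ := σ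
  obtain ⟨⟨s1, p1⟩, i0⟩ := c
  obtain ⟨⟨s2, p2⟩, i0'⟩ := c'
  have h0 := h
  simp only [UData] at h
  obtain ⟨h1, rfl, h2, h3, h4⟩ := h
  simp only [stepVia_iff]
  constructor
  · rintro ⟨-, hc, hc', e, ha, hi, hi'⟩
    refine ⟨hc, hc', ?_⟩
    rw [Prod.mk.injEq] at hc hc'
    obtain ⟨rfl, rfl⟩ := hc
    obtain ⟨rfl, rfl⟩ := hc'
    have hm : e = 0 → ¬ S.fwd r ∧ S.fwd r' := by
      rintro rfl
      rw [ha] at h1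
      exact S.marker _ _ h1
    refine ⟨(if S.fwd r then e else e + 1) - 1, (if S.fwd r' then e + 1 else e) - 1,
      ⟨h1, trivial, trivial, e, ha, ?_, ?_⟩, ?_, ?_⟩
    · split_ifs with hr
      · rcases Nat.eq_zero_or_pos e with he | he
        · exact absurd hr (hm he).1
        · omega
      · omega
    · split_ifs with hr
      · omega
      · rcases Nat.eq_zero_or_pos e with he | he
        · exact absurd (hm he).2 hr
        · omega
    · by_cases hp : T.fwd p <;> simp only [hp, if_true, if_false] at h2 ⊢ <;> subst h2 <;>
        by_cases hs : S.fwd s <;> simp [hs, hp] at hi ⊢ <;> omega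
    · by_cases hp : T.fwd p' <;> simp only [hp, if_true, if_false] at h3 ⊢ <;> subst h3 <;>
        by_cases hs : S.fwd s' <;> simp [hs, hp] at hi' ⊢ <;> omega
  · rintro ⟨hc, hc', i, i', ⟨-, -, -, e, ha, hi, hi'⟩, hj, hj'⟩
    refine ⟨⟨_, _, h0⟩, hc, hc', ?_⟩
    rw [Prod.mk.injEq] at hc hc'
    obtain ⟨rfl, rfl⟩ := hc
    obtain ⟨rfl, rfl⟩ := hc'
    refine ⟨e, ha, ?_, ?_⟩
    · by_cases hp : T.fwd p <;> simp only [hp, if_true, if_false] at h2 hj ⊢ <;> subst h2 <;>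
        by_cases hs : S.fwd s <;> simp [hs] at hi hi' ⊢ <;> omega
    · by_cases hp : T.fwd p' <;> simp only [hp, if_true, if_false] at h3 hj' ⊢ <;> subst h3 <;>
        by_cases hs : S.fwd s' <;> simp [hs] at hi hi' ⊢ <;> omega

theorem ustep_none (u : ℕ → A) {t : (S.Q × T.Q) × Option A × (S.Q × T.Q)} {π}
    (h : UData S T t none π) (c c' : (S.Q × T.Q) × ℕ) :
    StepVia (compAut S T) u c t c' ↔ t.1 = c.1 ∧ t.2.2 = c'.1 ∧ c.2 = 0 ∧ c'.2 = 0 := by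
  classical
  have hm : (t.1, none, t.2.2) ∈ (compAut S T).Δ := by
    obtain ⟨q, a, q'⟩ := t
    have h1 : a = none := h.1
    subst h1
    exact ⟨_, _, h⟩
  have hm2 := (compAut S T).marker _ _ hm
  rw [stepVia_iff]
  constructor
  · rintro ⟨-, h1, h2, e, h3, h4, h5⟩
    refine ⟨h1, h2, ?_⟩
    rw [h.1] at h3
    cases e with
    | succ e => simp [mword] at h3
    | zero =>
      rw [← h1, if_neg hm2.1] at h4
      rw [← h2, if_pos hm2.2] at h5
      omega
  · rintro ⟨h1, h2, h3, h4⟩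
    refine ⟨⟨_, _, h⟩, h1, h2, 0, h.1, ?_, ?_⟩
    · rw [← h1, if_neg hm2.1, h3]
    · rw [← h2, if_pos hm2.2, h4]

end

end Paper

namespace Paper

open Filter

section
variable {A B Γ : Type} {S : TwoWayTrans A B} {T : TwoWayTrans B Γ}

/-- Comparison of acceptance and output for linked runs. -/
theorem linked_iff [Finite A] [Finite B] (hS : Reversible S.toTwoWayAut)
    (hT : Reversible T.toTwoWayAut) (hS0 : ∀ q, (q, none, S.init) ∉ S.Δ)
    (K : ℕ) (hKS : ∀ c t, S.color c t ≤ K) (hKT : ∀ c t, T.color c t ≤ K)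
    {trU : ℕ → (S.Q × T.Q) × Option A × (S.Q × T.Q)}
    {trS : ℕ → S.Q × Option A × S.Q} {trT : ℕ → T.Q × Option B × T.Q}
    {k κ : ℕ → ℕ} {σ : ℕ → Option (S.Q × Option A × S.Q)}
    {L : ℕ → List (T.Q × Option B × T.Q)}
    (hd : ∀ j, UData S T (trU j) (σ j) (L j))
    (hκ : ∀ j, k j ≤ κ j + 1)
    (hσ : ∀ j, σ j = none ∨ σ j = some (trS (κ j)))
    (hk0 : k 0 = 0) (hk1 : ∀ j, k (j + 1) ≤ k j + 1)
    (hk2 : ∀ j, k (j + 1) = k j + 1 → κ j = k j ∧ σ j = some (trS (k j)))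
    (hk : Tendsto k atTop atTop) (hL : FlattenTo L trT) :
    (ParityCond (comp S T K).toParityAut trU ↔
      ParityCond S.toParityAut trS ∧ ParityCond T.toParityAut trT) ∧
    ∀ x, FlattenTo (fun i => (comp S T K).out (trU i)) x ↔
      FlattenTo (fun i => T.out (trT i)) x := by
  have hκt : Tendsto κ atTop atTop := by
    rw [tendsto_atTop] at hk ⊢
    intro N
    filter_upwards [hk (N + 1)] with j hj
    have := hκ j
    omega
  have hcov : ∀ n, ∃ j, κ j = n ∧ σ j = some (trS n) := by
    intro n
    have hex : ∃ j, n + 1 ≤ k j := (hk.eventually_ge_atTop (n + 1)).exists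
    classical
    have hs := Nat.find_spec hex
    rcases hn : Nat.find hex with _ | j
    · rw [hn, hk0] at hs; omega
    · have hm := Nat.find_min hex (m := j) (by omega)
      rw [hn] at hs
      have h1 := hk1 j
      obtain ⟨h2, h3⟩ := hk2 j (by omega)
      have : k j = n := by omega
      rw [this] at h2 h3
      exact ⟨j, h2, h3⟩
  refine ⟨?_, ?_⟩
  · unfold ParityCond
    have e1 : ∀ c : S.CIdx,
        sInf {m : ℕ | ∃ t, InfOften trU t ∧ (comp S T K).color (Sum.inl c) t = m} =
        sInf {m : ℕ | ∃ t, InfOften trS t ∧ S.color c t = m} := by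
      intro c
      refine sInf_infOften_eq _ _ _ _ K (fun t => comp_color_le K hKS _ _) (hKS c) ?_
      intro b hb
      refine freq_cover hκt _ _ ?_ ?_
      · intro j hj
        rw [comp_color_inl hS hT hS0 K (hd j)] at hj
        rcases hσ j with h | h <;> rw [h] at hj <;> simp only [colS] at hj
        · omega
        · exact hj
      · intro n
        obtain ⟨j, h1, h2⟩ := hcov n
        refine ⟨j, h1, fun h => ?_⟩
        rw [comp_color_inl hS hT hS0 K (hd j), h2]
        exact h
    have e2 : ∀ c : T.CIdx,
        sInf {m : ℕ | ∃ t, InfOften trU t ∧ (comp S T K).color (Sum.inr c) t = m} =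
        sInf {m : ℕ | ∃ t, InfOften trT t ∧ T.color c t = m} := by
      intro c
      refine sInf_infOften_eq _ _ _ _ K (fun t => comp_color_le K hKS _ _) (hKT c) ?_
      intro b hb
      rw [← freq_flatten hL (fun t => T.color c t ≤ b)]
      apply frequently_congr
      refine Eventually.of_forall fun j => ?_
      rw [comp_color_inr hS hT hS0 K (hd j), foldr_min_le _ _ _ hb]
    constructor
    · intro h
      exact ⟨fun c => by rw [← e1]; exact h (Sum.inl c), fun c => by rw [← e2]; exact h (Sum.inr c)⟩
    · rintro ⟨h1, h2⟩ (c | c)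
      · rw [e1]; exact h1 c
      · rw [e2]; exact h2 c
  · intro x
    rw [← flatten_comp hL T.out x]
    have : (fun i => (comp S T K).out (trU i)) = fun j => (L j).flatMap T.out := by
      funext j
      exact comp_out hS hT hS0 K (hd j)
    rw [this]

open Classical in
/-- One simulation step inside the output of the `b`-th transition of `S`. -/
theorem sim_block {u : ℕ → A} {y : ℕ → B} {cfgS : ℕ → S.Q × ℕ} {trS}
    {cfgT : ℕ → T.Q × ℕ} {trT}
    (hrS : IsRun S.toTwoWayAut u cfgS trS) (hy : FlattenTo (fun i => S.out (trS i)) y)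
    (hrT : IsRun T.toTwoWayAut y cfgT trT)
    (htT : Tendsto (fun i => (cfgT i).2) atTop atTop) (b τ : ℕ)
    (hpos : (cfgT τ).2 = (prefixCat (fun i => S.out (trS i))
      (if T.fwd (cfgT τ).1 then b else b + 1)).length) :
    ∃ m k' t, k' = (if T.fwd (cfgT (τ + m)).1 then b + 1 else b) ∧
      (cfgT (τ + m)).2 = (prefixCat (fun i => S.out (trS i)) k').length ∧
      UData S T t (some (trS b)) ((List.range' τ m).map trT) ∧
      StepVia (compAut S T) u
        (((cfgS (if T.fwd (cfgT τ).1 then b else b + 1)).1, (cfgT τ).1),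
          (cfgS (if T.fwd (cfgT τ).1 then b else b + 1)).2) t
        (((cfgS k').1, (cfgT (τ + m)).1), (cfgS k').2) ∧
      ∀ r ≤ m, (cfgT (τ + r)).2 ≤ (prefixCat (fun i => S.out (trS i)) (b + 1)).length := by
  set f := fun i => S.out (trS i) with hf
  obtain ⟨n, hn1, hn2⟩ : ∃ n, τ ≤ n ∧ (prefixCat f b).length + (f b).length < (cfgT n).2 := by
    obtain ⟨n, hn⟩ := ((htT.eventually_gt_atTop
      ((prefixCat f b).length + (f b).length)).and (eventually_ge_atTop τ)).exists
    exact ⟨n, hn.2, hn.1⟩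
  obtain ⟨n, rfl⟩ := Nat.exists_eq_add_of_le hn1
  obtain ⟨m, p', hp, hc, hr⟩ := run_exit (M := T.toTwoWayAut) (l := f b)
    (o := (prefixCat f b).length) (hy.block b) hrT.2 n τ (cfgT τ).1
    (if T.fwd (cfgT τ).1 then 0 else (f b).length) (by split_ifs <;> omega)
    (by
      refine Prod.ext rfl ?_
      rw [hpos]
      split_ifs
      · simp
      · simp [prefixCat_succ_length]) hn2
  have hp' : (cfgT (τ + m)).1 = p' := by rw [hc]
  obtain ⟨hs0, hs1, hs2, -⟩ := hrS.2 b
  have hD : UData S T (((cfgS (if T.fwd (cfgT τ).1 then b else b + 1)).1, (cfgT τ).1),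
      (trS b).2.1, ((cfgS (if T.fwd p' then b + 1 else b)).1, p'))
      (some (trS b)) ((List.range' τ m).map trT) := by
    refine ⟨hs0, rfl, ?_, ?_, hp⟩
    · simp only; split_ifs
      · exact hs1.symm
      · exact hs2.symm
    · simp only; split_ifs
      · exact hs2.symm
      · exact hs1.symm
  refine ⟨m, if T.fwd p' then b + 1 else b, _, by rw [hp'], ?_, hD, ?_, ?_⟩
  · rw [hc]
    simp only
    split_ifs
    · rw [prefixCat_succ_length]
    · simp
  · rw [ustep_some u hD, hp']
    refine ⟨rfl, rfl, (cfgS b).2, (cfgS (b + 1)).2, ?_, ?_, ?_⟩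
    · have := hrS.2 b
      rw [hs1, hs2]
      exact this
    · simp only; split_ifs <;> rfl
    · simp only; split_ifs <;> rfl
  · rw [prefixCat_succ_length]; exact hr

/-- One simulation step. -/
theorem sim_step {u : ℕ → A} {y : ℕ → B} {cfgS : ℕ → S.Q × ℕ} {trS}
    {cfgT : ℕ → T.Q × ℕ} {trT}
    (hrS : IsRun S.toTwoWayAut u cfgS trS) (hy : FlattenTo (fun i => S.out (trS i)) y)
    (hrT : IsRun T.toTwoWayAut y cfgT trT)
    (htT : Tendsto (fun i => (cfgT i).2) atTop atTop) (k τ : ℕ)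
    (hpos : (cfgT τ).2 = (prefixCat (fun i => S.out (trS i)) k).length) :
    ∃ m k' t σ κ,
      (cfgT (τ + m)).2 = (prefixCat (fun i => S.out (trS i)) k').length ∧
      UData S T t σ ((List.range' τ m).map trT) ∧
      StepVia (compAut S T) u
        (((cfgS k).1, (cfgT τ).1), (cfgS k).2) t
        (((cfgS k').1, (cfgT (τ + m)).1), (cfgS k').2) ∧
      k ≤ κ + 1 ∧ (σ = none ∨ σ = some (trS κ)) ∧ k' ≤ k + 1 ∧
      (k' = k + 1 → κ = k ∧ σ = some (trS k)) ∧
      (∀ r ≤ m, (cfgT (τ + r)).2 ≤ (prefixCat (fun i => S.out (trS i)) (k + 1)).length) ∧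
      (m = 0 → (T.fwd (cfgT τ).1 → k' = k + 1) ∧ (¬ T.fwd (cfgT τ).1 → k = k' + 1)) := by
  classical
  by_cases hp : T.fwd (cfgT τ).1
  · obtain ⟨m, k', t, h1, h2, h3, h4, h5⟩ := sim_block hrS hy hrT htT k τ (by rw [if_pos hp]; exact hpos)
    rw [if_pos hp] at h4
    refine ⟨m, k', t, _, k, h2, h3, h4, by omega, Or.inr rfl, ?_, fun _ => ⟨rfl, rfl⟩, h5, ?_⟩
    · rw [h1]; split_ifs <;> omega
    · rintro rfl
      refine ⟨fun _ => ?_, fun h => absurd hp h⟩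
      rw [h1, if_pos (by simpa using hp)]
  · rcases k with _ | b
    · have h0 : (cfgT τ).2 = 0 := hpos
      have hst := hrT.2 τ
      have hst' := (stepVia_iff _ _ _ _ _).1 hst
      obtain ⟨h1, h2, h3, e, h4, h5, h6⟩ := hst'
      rw [if_neg hp, h0] at h5
      obtain rfl : e = 0 := by omega
      have h7 : trT τ = ((cfgT τ).1, none, (cfgT (τ + 1)).1) := by
        refine Prod.ext h2 (Prod.ext h4 h3)
      rw [h7] at h1
      have h8 := T.marker _ _ h1
      rw [if_pos h8.2] at h6
      have hD : UData S T ((S.init, (cfgT τ).1), none, (S.init, (cfgT (τ + 1)).1)) none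
          ((List.range' τ 1).map trT) := by
        refine ⟨rfl, rfl, rfl, h1, ?_⟩
        simp [h7]
      refine ⟨1, 0, _, _, 0, ?_, hD, ?_, by omega, Or.inl rfl, by omega, by omega, ?_, by omega⟩
      · simp [prefixCat]; omega
      · rw [ustep_none u hD, hrS.1]
        exact ⟨rfl, rfl, rfl, rfl⟩
      · intro r hr
        have : r = 0 ∨ r = 1 := by omega
        rcases this with rfl | rfl
        · simp [h0]
        · omega
    · obtain ⟨m, k', t, h1, h2, h3, h4, h5⟩ :=
        sim_block hrS hy hrT htT b τ (by rw [if_neg hp]; exact hpos)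
      rw [if_neg hp] at h4
      refine ⟨m, k', t, _, b, h2, h3, h4, by omega, Or.inr rfl, ?_, ?_, ?_, ?_⟩
      · rw [h1]; split_ifs <;> omega
      · intro h
        rw [h1] at h; split_ifs at h <;> omega
      · intro r hr
        exact (h5 r hr).trans (prefixCat_mono _ (Nat.le_succ _))
      · rintro rfl
        refine ⟨fun h => absurd h hp, fun _ => ?_⟩
        rw [h1, if_neg (by simpa using hp)]

theorem comp_of_realizes [Finite A] [Finite B] (hS : Reversible S.toTwoWayAut)
    (hT : Reversible T.toTwoWayAut) (hS0 : ∀ q, (q, none, S.init) ∉ S.Δ)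
    (K : ℕ) (hKS : ∀ c t, S.color c t ≤ K) (hKT : ∀ c t, T.color c t ≤ K)
    {u : ℕ → A} {y : ℕ → B} {x : ℕ → Γ} (h1 : S.Realizes u y) (h2 : T.Realizes y x) :
    (comp S T K).Realizes u x := by
  obtain ⟨cfgS, trS, hrS, hwS, hpS, hy⟩ := h1
  obtain ⟨cfgT, trT, hrT, hwT, hpT, hx⟩ := h2
  have htT := run_tendsto hT.1 hrT hwT
  set f := fun i => S.out (trS i) with hf
  let X := {z : ℕ × ℕ // (cfgT z.2).2 = (prefixCat f z.1).length}
  have hstep := fun z : X => sim_step hrS hy hrT htT z.1.1 z.1.2 z.2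
  choose m k' t σ κ g1 g2 g3 g4 g5 g6 g7 g8 g9 using hstep
  let z : ℕ → X := fun n => Nat.rec ⟨(0, 0), by rw [hrT.1]; rfl⟩
    (fun _ z => ⟨(k' z, z.1.2 + m z), g1 z⟩) n
  have hz1 : ∀ j, (z (j + 1)).1.1 = k' (z j) := fun j => rfl
  have hz2 : ∀ j, (z (j + 1)).1.2 = (z j).1.2 + m (z j) := fun j => rfl
  let L : ℕ → List (T.Q × Option B × T.Q) := fun j => (List.range' (z j).1.2 (m (z j))).map trT
  have hcat : ∀ j, prefixCat L j = (List.range (z j).1.2).map trT := by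
    intro j
    induction j with
    | zero => rfl
    | succ j ih =>
      rw [prefixCat, ih, hz2, List.range_eq_range', List.range_eq_range', ← List.map_append]
      congr 1
      have := List.range'_append (s := 0) (m := (z j).1.2) (n := m (z j)) (step := 1)
      simpa using this
  have hmono : Monotone (fun j => (z j).1.2) :=
    monotone_nat_of_le_succ fun j => by rw [hz2]; omega
  -- times are unbounded
  have hτ : ∀ N, ∃ j, N ≤ (z j).1.2 := by
    by_contra hc
    push Not at hc
    obtain ⟨N, hN⟩ := hc
    obtain ⟨J, hJ⟩ : ∃ J, ∀ n, (z (J + n)).1.2 = (z J).1.2 := by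
      have hfin : (Set.range (fun j => (z j).1.2)).Finite :=
        (Set.finite_Iio N).subset (by rintro _ ⟨j, rfl⟩; exact hN j)
      obtain ⟨_, ⟨J, rfl⟩, hmax⟩ := hfin.exists_maximal (Set.range_nonempty _)
      refine ⟨J, fun n => le_antisymm ?_ (hmono (Nat.le_add_right _ _))⟩
      exact hmax ⟨J + n, rfl⟩ (hmono (Nat.le_add_right _ _))
    have hm0 : ∀ n, m (z (J + n)) = 0 := by
      intro n
      have e1 := hJ (n + 1)
      have e2 := hJ n
      have e3 := hz2 (J + n)
      rw [← Nat.add_assoc] at e1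
      omega
    by_cases hp : T.fwd (cfgT (z J).1.2).1
    · have hk : ∀ n, (z (J + n)).1.1 = (z J).1.1 + n := by
        intro n
        induction n with
        | zero => rfl
        | succ n ih =>
          have := (g9 _ (hm0 n)).1 (by rw [hJ]; exact hp)
          rw [← Nat.add_assoc, hz1, this, ih]
          omega
      have hbd : ∀ n, (prefixCat f ((z J).1.1 + n)).length = (cfgT (z J).1.2).2 := by
        intro n
        have := (z (J + n)).2
        rw [hk, hJ] at this
        exact this.symm
      obtain ⟨n, hn⟩ := hy.2 ((cfgT (z J).1.2).2 + 1)
      have e1 := prefixCat_mono f (Nat.le_add_left n (z J).1.1)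
      simp only at e1
      have := hbd n
      omega
    · have hk : ∀ n, (z (J + n)).1.1 + n = (z J).1.1 := by
        intro n
        induction n with
        | zero => rfl
        | succ n ih =>
          have := (g9 _ (hm0 n)).2 (by rw [hJ]; exact hp)
          rw [← Nat.add_assoc J, hz1]
          omega
      have := hk ((z J).1.1 + 1)
      omega
  have hL : FlattenTo L trT := by
    refine ⟨fun n => ?_, fun n => ?_⟩
    · rw [isPrefixOf_iff, hcat]; simp
    · obtain ⟨j, hj⟩ := hτ n
      exact ⟨j, by rw [hcat]; simpa using hj⟩
  -- the index in the run of `S` is unbounded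
  have hkun : ∀ N, ∃ j, N ≤ (z j).1.1 := by
    by_contra hc
    push Not at hc
    obtain ⟨N, hN⟩ := hc
    obtain ⟨i, hi⟩ := hwT ((prefixCat f N).length + 1)
    have hex := hτ (i + 1)
    classical
    have hs := Nat.find_spec hex
    rcases hn : Nat.find hex with _ | j
    · rw [hn] at hs
      have : (z 0).1.2 = 0 := rfl
      omega
    · have hm := Nat.find_min hex (m := j) (by omega)
      rw [hn, hz2] at hs
      have := g8 (z j) (i - (z j).1.2) (by omega)
      rw [show (z j).1.2 + (i - (z j).1.2) = i by omega] at this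
      change _ ≤ (prefixCat f _).length at this
      have e1 := prefixCat_mono f (show (z j).1.1 + 1 ≤ N from hN j)
      simp only at e1
      omega
  let cfgU : ℕ → (S.Q × T.Q) × ℕ := fun j =>
    (((cfgS (z j).1.1).1, (cfgT (z j).1.2).1), (cfgS (z j).1.1).2)
  have hrU : IsRun (compAut S T) u cfgU (fun j => t (z j)) := by
    refine ⟨?_, fun j => g3 (z j)⟩
    change (((cfgS 0).1, (cfgT 0).1), (cfgS 0).2) = _
    rw [hrS.1, hrT.1]
  have hk0 : (z 0).1.1 = 0 := rfl
  have hk1 : ∀ j, (z (j + 1)).1.1 ≤ (z j).1.1 + 1 := fun j => g6 (z j)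
  have hsurj : ∀ n, ∃ j, (z j).1.1 = n := by
    intro n
    have hex := hkun n
    classical
    have hs := Nat.find_spec hex
    rcases hn : Nat.find hex with _ | j
    · rw [hn] at hs
      exact ⟨0, by omega⟩
    · have hm := Nat.find_min hex (m := j) (by omega)
      rw [hn] at hs
      have := hk1 j
      exact ⟨j + 1, by omega⟩
  have hwU : ReadsWhole (compAut S T) cfgU := by
    intro n
    obtain ⟨i, hi⟩ := hwS n
    obtain ⟨j, hj⟩ := hsurj i
    refine ⟨j, ?_⟩
    change n ≤ (cfgS (z j).1.1).2
    rw [hj]; exact hi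
  have hposk : ∀ i, (cfgS i).2 ≤ i := by
    intro i
    induction i with
    | zero => rw [hrS.1]
    | succ i ih => have := step_pos_le (hrS.2 i); omega
  have hkt : Tendsto (fun j => (z j).1.1) atTop atTop :=
    tendsto_atTop_mono (fun j => hposk (z j).1.1)
      (run_tendsto (comp_reversible hS hT hS0).1 hrU hwU)
  obtain ⟨e1, e2⟩ := linked_iff hS hT hS0 K hKS hKT (trU := fun j => t (z j)) (trS := trS)
    (trT := trT) (k := fun j => (z j).1.1) (κ := fun j => κ (z j)) (σ := fun j => σ (z j)) (L := L)
    (fun j => g2 (z j)) (fun j => g4 (z j)) (fun j => g5 (z j)) hk0 hk1 (fun j => g7 (z j)) hkt hL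
  exact ⟨cfgU, fun j => t (z j), hrU, hwU, e1.2 ⟨hpS, hpT⟩, (e2 x).2 hx⟩

end

end Paper

namespace Paper

open Filter

theorem eventually_nil {C : Type} (f : ℕ → List C)
    (h : ¬ ∀ m, ∃ n, m ≤ (prefixCat f n).length) : ∃ N, ∀ n, N ≤ n → f n = [] := by
  push Not at h
  obtain ⟨M, hM⟩ := h
  have hfin : (Set.range (fun j => (prefixCat f j).length)).Finite :=
    (Set.finite_Iio M).subset (by rintro _ ⟨j, rfl⟩; exact hM j)
  obtain ⟨_, ⟨J, rfl⟩, hmax⟩ := hfin.exists_maximal (Set.range_nonempty _)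
  refine ⟨J, fun n hn => ?_⟩
  have h1 := hmax ⟨n + 1, rfl⟩ (prefixCat_mono f (show J ≤ n + 1 by omega))
  have h2 := prefixCat_mono f hn
  have h3 := prefixCat_succ_length f n
  simp only at h1 h2
  exact List.length_eq_zero_iff.1 (by omega)

theorem bounded_of_nil {C : Type} (f : ℕ → List C) (N : ℕ) (h : ∀ n, N ≤ n → f n = []) (n : ℕ) :
    (prefixCat f n).length ≤ (prefixCat f N).length := by
  rcases le_total n N with hn | hn
  · exact prefixCat_mono f hn
  · obtain ⟨r, rfl⟩ := Nat.exists_eq_add_of_le hn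
    clear hn
    induction r with
    | zero => exact le_rfl
    | succ r ih =>
      rw [← Nat.add_assoc, prefixCat_succ_length, h (N + r) (by omega)]
      simpa using ih

section
variable {A B Γ : Type} {S : TwoWayTrans A B} {T : TwoWayTrans B Γ}

theorem no_pred (hS0 : ∀ q, (q, none, S.init) ∉ S.Δ) {u : ℕ → A} {c t}
    (h : StepVia S.toTwoWayAut u c t (S.init, 0)) : False := by
  classical
  rw [stepVia_iff] at h
  obtain ⟨q, a, q'⟩ := t
  obtain ⟨h1, h2, h3, e, h4, -, h5⟩ := h
  simp only at h3 h4 h5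
  rw [if_pos S.init_fwd] at h5
  obtain rfl : e = 0 := by omega
  subst h3 h4
  exact hS0 _ h1

open Classical in
theorem ustep_some' {u : ℕ → A} {t : (S.Q × T.Q) × Option A × (S.Q × T.Q)} {σ π}
    (h : UData S T t (some σ) π) {c c' : (S.Q × T.Q) × ℕ}
    (hst : StepVia (compAut S T) u c t c') : ∃ d d',
      StepVia S.toTwoWayAut u d σ d' ∧ (c.1.1, c.2) = (if T.fwd c.1.2 then d else d') ∧
      (c'.1.1, c'.2) = (if T.fwd c'.1.2 then d' else d) ∧
      Trav T.toTwoWayAut (S.out σ) c.1.2 π c'.1.2 := by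
  obtain ⟨h1, h2, i, i', h3, h4, h5⟩ := (ustep_some u h c c').1 hst
  obtain ⟨-, -, e1, e2, e3⟩ := h
  rw [h1] at e1 e3 h4
  rw [h2] at e2 e3 h5
  refine ⟨_, _, h3, ?_, ?_, e3⟩
  · rw [e1, h4]; split_ifs <;> rfl
  · rw [e2, h5]; split_ifs <;> rfl

theorem ustep_none' {u : ℕ → A} {t : (S.Q × T.Q) × Option A × (S.Q × T.Q)} {π}
    (h : UData S T t none π) {c c' : (S.Q × T.Q) × ℕ}
    (hst : StepVia (compAut S T) u c t c') :
      (c.1.1, c.2) = (S.init, 0) ∧ (c'.1.1, c'.2) = (S.init, 0) ∧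
      (c.1.2, none, c'.1.2) ∈ T.Δ ∧ π = [(c.1.2, none, c'.1.2)] := by
  obtain ⟨h1, h2, h3, h4⟩ := (ustep_none u h c c').1 hst
  obtain ⟨-, e1, e2, e3, e4⟩ := h
  rw [h1] at e1 e3 e4
  rw [h2] at e2 e3 e4
  rw [e1, e2, h3, h4]
  exact ⟨rfl, rfl, e3, e4⟩

theorem realizes_of_comp [Finite A] [Finite B] (hS : Reversible S.toTwoWayAut)
    (hT : Reversible T.toTwoWayAut) (hS0 : ∀ q, (q, none, S.init) ∉ S.Δ)
    (K : ℕ) (hKS : ∀ c t, S.color c t ≤ K) (hKT : ∀ c t, T.color c t ≤ K)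
    {u : ℕ → A} {x : ℕ → Γ} (hU : (comp S T K).Realizes u x) :
    ∃ y, S.Realizes u y ∧ T.Realizes y x := by
  classical
  obtain ⟨cfgU, trU, hrU, hwU, hpU, hx⟩ := hU
  change ℕ → (S.Q × T.Q) × ℕ at cfgU
  change ℕ → (S.Q × T.Q) × Option A × (S.Q × T.Q) at trU
  change IsRun (compAut S T) u cfgU trU at hrU
  change ReadsWhole (compAut S T) cfgU at hwU
  have hd : ∀ j, ∃ σ π, UData S T (trU j) σ π := fun j => (hrU.2 j).1
  choose σ L hd using hd
  let p : ℕ → T.Q := fun j => (cfgU j).1.2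
  let cs : ℕ → S.Q × ℕ := fun j => ((cfgU j).1.1, (cfgU j).2)
  have hcs0 : cs 0 = (S.init, 0) := by
    change ((cfgU 0).1.1, (cfgU 0).2) = _
    rw [hrU.1]
  have hp0 : p 0 = T.init := by
    change (cfgU 0).1.2 = _
    rw [hrU.1]
  -- local description of the steps
  have hsome : ∀ j s, σ j = some s → ∃ d d',
      StepVia S.toTwoWayAut u d s d' ∧ cs j = (if T.fwd (p j) then d else d') ∧
      cs (j + 1) = (if T.fwd (p (j + 1)) then d' else d) ∧
      Trav T.toTwoWayAut (S.out s) (p j) (L j) (p (j + 1)) := by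
    intro j s hs
    have := hd j
    rw [hs] at this
    exact ustep_some' this (hrU.2 j)
  have hnone : ∀ j, σ j = none → cs j = (S.init, 0) ∧ cs (j + 1) = (S.init, 0) ∧
      (p j, none, p (j + 1)) ∈ T.Δ ∧ L j = [(p j, none, p (j + 1))] := by
    intro j hs
    have := hd j
    rw [hs] at this
    exact ustep_none' this (hrU.2 j)
  let k : ℕ → ℕ := fun n => Nat.rec 0 (fun j kj =>
    if T.fwd (p j) then (if T.fwd (p (j + 1)) then kj + 1 else kj)
    else (if T.fwd (p (j + 1)) then kj else kj - 1)) n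
  have hk0 : k 0 = 0 := rfl
  have hks : ∀ j, k (j + 1) = if T.fwd (p j) then (if T.fwd (p (j + 1)) then k j + 1 else k j)
    else (if T.fwd (p (j + 1)) then k j else k j - 1) := fun j => rfl
  have hpath : ∀ j, ∃ ts, ts.length = k j ∧
      Path (StepVia S.toTwoWayAut u) (S.init, 0) ts (cs j) := by
    intro j
    induction j with
    | zero => exact ⟨[], rfl, hcs0.symm⟩
    | succ j ih =>
      obtain ⟨ts, hl, hts⟩ := ih
      rcases hσ : σ j with _ | s
      · obtain ⟨h1, h2, h3, -⟩ := hnone j hσ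
        have hm := T.marker _ _ h3
        refine ⟨ts, ?_, ?_⟩
        · rw [hks, if_neg hm.1, if_pos hm.2, hl]
        · rw [h2]; rw [h1] at hts; exact hts
      · obtain ⟨d, d', h1, h2, h3, -⟩ := hsome j s hσ
        rw [hks, h3]
        by_cases hp : T.fwd (p j)
        · rw [if_pos hp] at h2
          rw [h2] at hts
          by_cases hp' : T.fwd (p (j + 1)) <;> simp only [hp, hp', if_true, if_false]
          · exact ⟨ts ++ [s], by simp [hl], hts.snoc h1⟩
          · exact ⟨ts, hl, hts⟩
        · rw [if_neg hp] at h2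
          rw [h2] at hts
          by_cases hp' : T.fwd (p (j + 1)) <;> simp only [hp, hp', if_true, if_false]
          · exact ⟨ts, hl, hts⟩
          · rcases Nat.eq_zero_or_pos ts.length with h0 | h0
            · rw [List.length_eq_zero_iff] at h0
              subst h0
              have : (S.init, 0) = d' := hts
              rw [← this] at h1
              exact (no_pred hS0 h1).elim
            · obtain ⟨l', t, e, rfl, h4, h5⟩ := hts.unsnoc h0
              obtain ⟨-, rfl⟩ := stepVia_codet hS.2 u _ _ _ _ _ h1 h5
              refine ⟨l', ?_, h4⟩
              rw [← hl]; simp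
  have hposk : ∀ j, (cs j).2 ≤ k j := by
    intro j
    obtain ⟨ts, hl, hts⟩ := hpath j
    have := run_pos_le hts
    simp only at this
    omega
  have hkt : Tendsto k atTop atTop :=
    tendsto_atTop_mono hposk (run_tendsto (comp_reversible hS hT hS0).1 hrU hwU)
  -- the run of `S`
  obtain ⟨cfgS, trS, hS1, hS2⟩ := exists_run (stepVia_det hS.1 u) (S.init, 0) (by
    intro n
    obtain ⟨j, hj⟩ := (hkt.eventually_ge_atTop n).exists
    obtain ⟨ts, hl, hts⟩ := hpath j
    exact ⟨ts, _, by omega, hts⟩)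
  have hrS : IsRun S.toTwoWayAut u cfgS trS := ⟨hS1, hS2⟩
  have hcs : ∀ j, cs j = cfgS (k j) := by
    intro j
    obtain ⟨ts, hl, hts⟩ := hpath j
    rw [← hS1] at hts
    have := (Path.eq_run (stepVia_det hS.1 u) hS2 0 hts).2
    rwa [Nat.zero_add, hl] at this
  have hwS : ReadsWhole S.toTwoWayAut cfgS := by
    intro n
    obtain ⟨j, hj⟩ := hwU n
    refine ⟨k j, ?_⟩
    rw [← hcs]
    exact hj
  have hinit : ∀ n, cfgS n = (S.init, 0) → n = 0 := by
    intro n hn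
    cases n with
    | zero => rfl
    | succ n =>
      have := hS2 n
      rw [hn] at this
      exact (no_pred hS0 this).elim
  have hlink : ∀ j, (∃ b, k j = (if T.fwd (p j) then b else b + 1) ∧
      k (j + 1) = (if T.fwd (p (j + 1)) then b + 1 else b) ∧ σ j = some (trS b) ∧
      Trav T.toTwoWayAut (S.out (trS b)) (p j) (L j) (p (j + 1))) ∨
      (σ j = none ∧ k j = 0 ∧ k (j + 1) = 0 ∧ ¬ T.fwd (p j) ∧ T.fwd (p (j + 1)) ∧
        (p j, none, p (j + 1)) ∈ T.Δ ∧ L j = [(p j, none, p (j + 1))]) := by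
    intro j
    rcases hσ : σ j with _ | s
    · right
      obtain ⟨h1, h2, h3, h4⟩ := hnone j hσ
      have hm := T.marker _ _ h3
      rw [hcs] at h1 h2
      exact ⟨rfl, hinit _ h1, hinit _ h2, hm.1, hm.2, h3, h4⟩
    · left
      obtain ⟨d, d', h1, h2, h3, h4⟩ := hsome j s hσ
      have hkj := hks j
      by_cases hp : T.fwd (p j)
      · rw [if_pos hp, hcs] at h2
        have h5 := hS2 (k j)
        rw [h2] at h5
        obtain ⟨rfl, -⟩ := stepVia_det hS.1 u _ _ _ _ _ h1 h5
        refine ⟨k j, by rw [if_pos hp], by rw [hkj, if_pos hp], rfl, h4⟩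
      · rw [if_neg hp, hcs] at h2
        rw [if_neg hp] at hkj
        rcases hk : k j with _ | b
        · rw [hk, hS1] at h2
          rw [← h2] at h1
          exact (no_pred hS0 h1).elim
        · have h5 := hS2 b
          rw [← hk, h2] at h5
          obtain ⟨rfl, -⟩ := stepVia_codet hS.2 u _ _ _ _ _ h1 h5
          refine ⟨b, by rw [if_neg hp], by rw [hkj, hk]; simp, rfl, h4⟩
  have hk1 : ∀ j, k (j + 1) ≤ k j + 1 := by
    intro j
    rcases hlink j with ⟨b, h1, h2, -⟩ | ⟨-, h1, h2, -⟩
    · split_ifs at h1 h2 <;> omega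
    · omega
  have hk2 : ∀ j, k (j + 1) = k j + 1 → T.fwd (p j) ∧ T.fwd (p (j + 1)) ∧
      σ j = some (trS (k j)) := by
    intro j hj
    rcases hlink j with ⟨b, h1, h2, h3, -⟩ | ⟨-, h1, h2, -⟩
    · split_ifs at h1 h2 with hp hp'
      · subst h1; exact ⟨hp, hp', h3⟩
      all_goals omega
    · omega
  set f := fun i => S.out (trS i) with hf
  -- the output of `S` is infinite
  have hfun : ∀ m, ∃ n, m ≤ (prefixCat f n).length := by
    by_contra hc
    obtain ⟨N, hN⟩ := eventually_nil f hc
    obtain ⟨J, hJ1, hJ2⟩ : ∃ J, N ≤ k J ∧ T.fwd (p J) := by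
      have hex : ∃ j, N + 1 ≤ k j := (hkt.eventually_ge_atTop (N + 1)).exists
      have hs := Nat.find_spec hex
      rcases hn : Nat.find hex with _ | j
      · rw [hn, hk0] at hs; omega
      · have hm := Nat.find_min hex (m := j) (by omega)
        rw [hn] at hs
        have := hk1 j
        exact ⟨j + 1, by omega, (hk2 j (by omega)).2.1⟩
    have hstay : ∀ j, N ≤ k j → T.fwd (p j) → N ≤ k (j + 1) ∧ T.fwd (p (j + 1)) ∧ L j = [] := by
      intro j h1 h2
      rcases hlink j with ⟨b, h3, h4, h5, h6⟩ | ⟨-, -, -, h3, -⟩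
      · rw [if_pos h2] at h3
        have h7 : S.out (trS b) = [] := hN b (by omega)
        rw [h7] at h6
        obtain ⟨h8, h9⟩ := h6.empty
        rw [← h9] at h4 ⊢
        rw [if_pos h2] at h4
        exact ⟨by omega, h2, h8⟩
      · exact absurd h2 h3
    have hall : ∀ n, N ≤ k (J + n) ∧ T.fwd (p (J + n)) := by
      intro n
      induction n with
      | zero => exact ⟨hJ1, hJ2⟩
      | succ n ih =>
        obtain ⟨h1, h2, -⟩ := hstay _ ih.1 ih.2
        exact ⟨h1, h2⟩
    have hb := bounded_of_nil (fun i => (comp S T K).out (trU i)) J (by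
      intro n hn
      obtain ⟨r, rfl⟩ := Nat.exists_eq_add_of_le hn
      rw [comp_out hS hT hS0 K (hd _), (hstay _ (hall r).1 (hall r).2).2.2]
      rfl)
    obtain ⟨n, hn⟩ := hx.2 ((prefixCat (fun i => (comp S T K).out (trU i)) J).length + 1)
    have := hb n
    omega
  obtain ⟨y, hy⟩ := exists_flatten f hfun
  -- the run of `T`
  have hTp : ∀ j, Path (StepVia T.toTwoWayAut y) (p j, (prefixCat f (k j)).length) (L j)
      (p (j + 1), (prefixCat f (k (j + 1))).length) := by
    intro j
    rcases hlink j with ⟨b, h1, h2, h3, h4⟩ | ⟨-, h1, h2, h3, h4, h5, h6⟩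
    · have := bpath_lift (hy.block b) h4
      simp only at this
      convert this using 2
      · rw [h1]
        split_ifs
        · simp
        · rw [prefixCat_succ_length]
      · rw [h2]
        split_ifs
        · rw [prefixCat_succ_length]
        · simp
    · rw [h1, h2, h6]
      refine ⟨_, ?_, rfl⟩
      rw [stepVia_iff]
      refine ⟨h5, rfl, rfl, 0, rfl, ?_, ?_⟩
      · rw [if_neg h3]; rfl
      · rw [if_pos h4]; rfl
  have hTpath : ∀ j, Path (StepVia T.toTwoWayAut y) (T.init, 0) (prefixCat L j)
      (p j, (prefixCat f (k j)).length) := by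
    intro j
    induction j with
    | zero => rw [hp0]; exact rfl
    | succ j ih => exact ih.append (hTp j)
  have hun : ∀ m, ∃ j, m ≤ (prefixCat f (k j)).length := by
    intro m
    obtain ⟨n, hn⟩ := hfun m
    obtain ⟨j, hj⟩ := (hkt.eventually_ge_atTop n).exists
    exact ⟨j, hn.trans (prefixCat_mono f hj)⟩
  have hLun : ∀ m, ∃ j, m ≤ (prefixCat L j).length := by
    intro m
    obtain ⟨j, hj⟩ := hun m
    have := run_pos_le (hTpath j)
    simp only at this
    exact ⟨j, by omega⟩
  obtain ⟨cfgT, trT, hT1, hT2⟩ := exists_run (stepVia_det hT.1 y) (T.init, 0) (by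
    intro n
    obtain ⟨j, hj⟩ := hLun n
    exact ⟨_, _, hj, hTpath j⟩)
  have hTeq : ∀ j, prefixCat L j = (List.range' 0 (prefixCat L j).length).map trT ∧
      (p j, (prefixCat f (k j)).length) = cfgT (prefixCat L j).length := by
    intro j
    have := hTpath j
    rw [← hT1] at this
    have := Path.eq_run (stepVia_det hT.1 y) hT2 0 this
    rwa [Nat.zero_add] at this
  have hL : FlattenTo L trT := by
    refine ⟨fun n => ?_, hLun⟩
    rw [isPrefixOf_iff, List.range_eq_range']
    exact (hTeq n).1
  have hwT : ReadsWhole T.toTwoWayAut cfgT := by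
    intro n
    obtain ⟨j, hj⟩ := hun n
    refine ⟨(prefixCat L j).length, ?_⟩
    rw [← (hTeq j).2]
    exact hj
  obtain ⟨e1, e2⟩ := linked_iff hS hT hS0 K hKS hKT (trU := trU) (trS := trS)
    (trT := trT) (k := k) (κ := fun j => if T.fwd (p j) then k j else k j - 1) (σ := σ) (L := L)
    hd (fun j => by split_ifs <;> omega)
    (by
      intro j
      rcases hlink j with ⟨b, h1, h2, h3, -⟩ | ⟨h1, -⟩
      · right
        rw [h3]
        congr 2
        split_ifs at h1 ⊢ <;> omega
      · exact Or.inl h1) hk0 hk1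
    (by
      intro j hj
      obtain ⟨h1, -, h2⟩ := hk2 j hj
      exact ⟨by simp only [h1, if_true], h2⟩) hkt hL
  obtain ⟨hpS, hpT⟩ := e1.1 hpU
  exact ⟨y, ⟨cfgS, trS, hrS, hwS, hpS, hy⟩, ⟨cfgT, trT, ⟨hT1, hT2⟩, hwT, hpT, (e2 x).1 hx⟩⟩

end

/-! ## Removing transitions re-entering the initial configuration -/

/-- `S` without the end-marker transitions to the initial state. -/
abbrev trim {A B : Type} (S : TwoWayTrans A B) : TwoWayTrans A B where
  Q := S.Q
  finQ := S.finQ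
  fwd := S.fwd
  init := S.init
  init_fwd := S.init_fwd
  Δ := {t | t ∈ S.Δ ∧ ¬ (t.2.1 = none ∧ t.2.2 = S.init)}
  marker := fun p q h => S.marker p q h.1
  CIdx := S.CIdx
  finC := S.finC
  color := S.color
  out := S.out

theorem trim_realizes {A B : Type} (S : TwoWayTrans A B) (hS : Reversible S.toTwoWayAut)
    (u : ℕ → A) (y : ℕ → B) : (trim S).Realizes u y ↔ S.Realizes u y := by
  constructor
  · rintro ⟨cfg, tr, hr, hw, hp, hy⟩
    exact ⟨cfg, tr, ⟨hr.1, fun i => ⟨(hr.2 i).1.1, (hr.2 i).2⟩⟩, hw, hp, hy⟩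
  · rintro ⟨cfg, tr, hr, hw, hp, hy⟩
    refine ⟨cfg, tr, ⟨hr.1, fun i => ⟨⟨(hr.2 i).1, ?_⟩, (hr.2 i).2⟩⟩, hw, hp, hy⟩
    rintro ⟨h1, h2⟩
    obtain ⟨-, -, h3, h4⟩ := hr.2 i
    rw [h1] at h4
    have hpos : (cfg (i + 1)).2 = 0 := by
      rcases h4 with ⟨-, h, -⟩ | ⟨-, -, h, -⟩ | ⟨-, -, -, h⟩
      · cases h
      · cases h
      · exact h
    have : cfg (i + 1) = cfg 0 := by
      rw [hr.1]
      exact Prod.ext (h3.symm.trans h2) hpos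
    have := run_injective hS.1 hr hw this
    omega

theorem trim_reversible {A B : Type} (S : TwoWayTrans A B) (hS : Reversible S.toTwoWayAut) :
    Reversible (trim S).toTwoWayAut :=
  ⟨fun p a q q' h h' => hS.1 p a q q' h.1 h'.1, fun p p' a q h h' => hS.2 p p' a q h.1 h'.1⟩

theorem color_bound {A B : Type} [Finite A] (S : TwoWayTrans A B) :
    ∃ K, ∀ c t, S.color c t ≤ K := by
  have hfin : (Set.range (fun z : S.CIdx × (S.Q × Option A × S.Q) => S.color z.1 z.2)).Finite :=
    Set.finite_range _
  obtain ⟨K, hK⟩ := hfin.bddAbove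
  exact ⟨K, fun c t => hK ⟨(c, t), rfl⟩⟩

end Paper

namespace Paper

/-- Composition of reversible two-way parity transducers: given reversible
`S` (with `n` states, output alphabet `B`) and `T` (with `m` states, input alphabet `B`),
there is a reversible two-way parity transducer `U` with at most `C·n·m` states such that
`⟦U⟧ = ⟦T⟧ ∘ ⟦S⟧` as partial functions (stated via equality of graphs, which gives in
particular `dom U = {u ∈ dom S : ⟦S⟧ u ∈ dom T}` and `⟦U⟧ u = ⟦T⟧ (⟦S⟧ u)`). -/
theorem rbt_composition :
    ∃ C : ℕ, ∀ (A B Γ : Type) [Fintype A] [Fintype B] [Fintype Γ]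
      (S : TwoWayTrans A B) (T : TwoWayTrans B Γ) (n m : ℕ),
      Reversible S.toTwoWayAut → Reversible T.toTwoWayAut →
      Fintype.card S.Q = n → Fintype.card T.Q = m →
      ∃ U : TwoWayTrans A Γ,
        Reversible U.toTwoWayAut ∧
        Fintype.card U.Q ≤ C * n * m ∧
        (∀ u x, U.Realizes u x ↔ ∃ y, S.Realizes u y ∧ T.Realizes y x) := by
  refine ⟨1, ?_⟩
  intro A B Γ _ _ _ S T n m hS hT hn hm
  obtain ⟨K1, hK1⟩ := color_bound S
  obtain ⟨K2, hK2⟩ := color_bound T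
  have hS' := trim_reversible S hS
  have hS0 : ∀ q, (q, none, (trim S).init) ∉ (trim S).Δ := fun q h => h.2 ⟨rfl, rfl⟩
  have hKS : ∀ c t, (trim S).color c t ≤ max K1 K2 := fun c t => (hK1 c t).trans (le_max_left _ _)
  have hKT : ∀ c t, T.color c t ≤ max K1 K2 := fun c t => (hK2 c t).trans (le_max_right _ _)
  refine ⟨comp (trim S) T (max K1 K2), comp_reversible hS' hT hS0, ?_, ?_⟩
  · rw [one_mul, ← hn, ← hm]
    exact (Fintype.card_prod S.Q T.Q).le
  · intro u x
    constructor
    · intro h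
      obtain ⟨y, h1, h2⟩ := realizes_of_comp hS' hT hS0 _ hKS hKT h
      exact ⟨y, (trim_realizes S hS u y).1 h1, h2⟩
    · rintro ⟨y, h1, h2⟩
      exact comp_of_realizes hS' hT hS0 _ hKS hKT ((trim_realizes S hS u y).2 h1) h2

end Paper
end

section
/- Let T be a one-way deterministic parity transducer with n states. Then there exists a reversible two-way parity transducer T′ with at most 4n² states such that ⟦T′⟧ = ⟦T⟧ as partial functions from A^ω to B^ω. -/
namespace Paper

section Construction

variable {A Q : Type}

/-- Signed rank: the order on `Q` seen from side `s`. -/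
def key (e : Q → ℤ) (s : Bool) (p : Q) : ℤ := if s then e p else - e p

/-- `p'` is the next sibling of `p` on side `s`. -/
def Adj (D : Set (Q × A × Q)) (e : Q → ℤ) (a : A) (s : Bool) (p p' : Q) : Prop :=
  ∃ r, (p, a, r) ∈ D ∧ (p', a, r) ∈ D ∧ key e s p < key e s p' ∧
    ∀ x, (x, a, r) ∈ D → key e s p < key e s x → key e s p' ≤ key e s x

/-- `p` is the extreme child of `r` on side `s`. -/
def Par (D : Set (Q × A × Q)) (e : Q → ℤ) (a : A) (s : Bool) (p r : Q) : Prop :=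
  (p, a, r) ∈ D ∧ ∀ x, (x, a, r) ∈ D → key e s x ≤ key e s p

def Leaf (D : Set (Q × A × Q)) (a : A) (r : Q) : Prop := ∀ p, (p, a, r) ∉ D

/-- The transitions of the reversible transducer: two heads climbing on the outline. -/
inductive RevTr (D : Set (Q × A × Q)) (e : Q → ℤ) (q0 : Q) :
    (Q × Bool) × (Q × Bool) → Option A → (Q × Bool) × (Q × Bool) → Prop
  | rr (a : A) (p q p' q' : Q) (s t : Bool) : t = !s → Par D e a s p p' → Par D e a t q q' →
      RevTr D e q0 ((p, s), (q, t)) (some a) ((p', s), (q', t))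
  | r1 (a : A) (p q p' : Q) (s t : Bool) : t = !s → Adj D e a s p p' →
      RevTr D e q0 ((p, s), (q, t)) (some a) ((p', t), (q, t))
  | r2 (a : A) (p q x q' : Q) (s t : Bool) : t = !s → Par D e a s p x → Adj D e a t q q' →
      RevTr D e q0 ((p, s), (q, t)) (some a) ((p, s), (q', s))
  | ll (a : A) (p q p' q' : Q) (s : Bool) : Par D e a s p' p → Par D e a s q' q →
      RevTr D e q0 ((p, s), (q, s)) (some a) ((p', s), (q', s))
  | l1 (a : A) (p q : Q) (s t : Bool) : t = !s → Leaf D a p →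
      RevTr D e q0 ((p, s), (q, s)) (some a) ((p, t), (q, s))
  | l2 (a : A) (p q x : Q) (s t : Bool) : t = !s → Par D e a s x p → Leaf D a q →
      RevTr D e q0 ((p, s), (q, s)) (some a) ((p, s), (q, t))
  | m1 (p q : Q) (s t : Bool) : t = !s → p ≠ q0 →
      RevTr D e q0 ((p, s), (q, s)) none ((p, t), (q, s))
  | m2 (p q : Q) (s t : Bool) : t = !s → p = q0 → q ≠ q0 →
      RevTr D e q0 ((p, s), (q, s)) none ((p, s), (q, t))

variable {D : Set (Q × A × Q)} {e : Q → ℤ} {q0 : Q}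

lemma key_not (s : Bool) (p : Q) : key e (!s) p = - key e s p := by
  cases s <;> simp [key]

lemma key_inj (he : Function.Injective e) (s : Bool) {p q : Q} (h : key e s p = key e s q) :
    p = q := by
  cases s <;> simp [key] at h <;> exact he h

lemma Adj.symm {a : A} {s t : Bool} {p p' : Q} (hst : t = !s)
    (h : Adj D e a s p p') : Adj D e a t p' p := by
  subst hst
  obtain ⟨r, h1, h2, h3, h4⟩ := h
  refine ⟨r, h2, h1, by rw [key_not, key_not]; omega, fun x hx hlt => ?_⟩
  rw [key_not, key_not] at *
  by_contra hc
  have := h4 x hx (by omega)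
  omega

section

lemma Adj.fun
    (he : Function.Injective e)
    (hdet : ∀ p a q q', (p, a, q) ∈ D → (p, a, q') ∈ D → q = q')
    {a : A} {s : Bool} {p x y : Q}
    (h : Adj D e a s p x) (h' : Adj D e a s p y) : x = y := by
  obtain ⟨r, h1, h2, h3, h4⟩ := h
  obtain ⟨r', g1, g2, g3, g4⟩ := h'
  obtain rfl := hdet _ _ _ _ h1 g1
  exact key_inj he s (le_antisymm (h4 _ g2 g3) (g4 _ h2 h3))

lemma Par.fun
    (hdet : ∀ p a q q', (p, a, q) ∈ D → (p, a, q') ∈ D → q = q')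
    {a : A} {s : Bool} {p x y : Q}
    (h : Par D e a s p x) (h' : Par D e a s p y) : x = y := hdet _ _ _ _ h.1 h'.1

lemma Par.inj
    (he : Function.Injective e)
    {a : A} {s : Bool} {p x y : Q}
    (h : Par D e a s x p) (h' : Par D e a s y p) : x = y :=
  key_inj he s (le_antisymm (h'.2 _ h.1) (h.2 _ h'.1))

lemma Par.not_adj
    (hdet : ∀ p a q q', (p, a, q) ∈ D → (p, a, q') ∈ D → q = q')
    {a : A} {s : Bool} {p x y : Q}
    (h : Par D e a s p x) (h' : Adj D e a s p y) : False := by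
  obtain ⟨r, h1, h2, h3, h4⟩ := h'
  obtain rfl := hdet _ _ _ _ h1 h.1
  have := h.2 _ h2
  omega

lemma RevTr.det
    (he : Function.Injective e)
    (hdet : ∀ p a q q', (p, a, q) ∈ D → (p, a, q') ∈ D → q = q')
    {x y y' : (Q × Bool) × (Q × Bool)} {a : Option A}
    (h : RevTr D e q0 x a y) (h' : RevTr D e q0 x a y') : y = y' := by
  have F1 := fun a s p x y => Adj.fun he hdet (a := a) (s := s) (p := p) (x := x) (y := y)
  have F2 := fun a s p x y => Par.fun (e := e) hdet (a := a) (s := s) (p := p) (x := x) (y := y)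
  have F3 := fun a s p x y => Par.inj (D := D) he (a := a) (s := s) (p := p) (x := x) (y := y)
  have F4 := fun a s p x y =>
    Par.not_adj (e := e) hdet (a := a) (s := s) (p := p) (x := x) (y := y)
  have F5 : ∀ a s p r, Par D e a s p r → Leaf D a r → False := fun a s p r h h' => h' _ h.1
  cases h <;> cases h' <;> grind

lemma RevTr.codet
    (he : Function.Injective e)
    (hdet : ∀ p a q q', (p, a, q) ∈ D → (p, a, q') ∈ D → q = q')
    {x x' y : (Q × Bool) × (Q × Bool)} {a : Option A}
    (h : RevTr D e q0 x a y) (h' : RevTr D e q0 x' a y) : x = x' := by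
  have F0 : ∀ a p q, Adj D e a true p q → Adj D e a false q p := fun a p q h => h.symm rfl
  have F0' : ∀ a p q, Adj D e a false p q → Adj D e a true q p := fun a p q h => h.symm rfl
  have F6 : ∀ a s p q, Adj D e a s p q → s = true ∨ s = false := fun a s p q _ => by
    cases s <;> simp
  have F1 := fun a s p x y => Adj.fun he hdet (a := a) (s := s) (p := p) (x := x) (y := y)
  have F2 := fun a s p x y => Par.fun (e := e) hdet (a := a) (s := s) (p := p) (x := x) (y := y)
  have F3 := fun a s p x y => Par.inj (D := D) he (a := a) (s := s) (p := p) (x := x) (y := y)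
  have F4 := fun a s p x y =>
    Par.not_adj (e := e) hdet (a := a) (s := s) (p := p) (x := x) (y := y)
  have F5 : ∀ a s p r, Par D e a s p r → Leaf D a r → False := fun a s p r h h' => h' _ h.1
  cases h <;> cases h' <;> grind

end

lemma exists_adj_or_par [Finite Q] {a : A} (s : Bool) {p r : Q} (h : (p, a, r) ∈ D) :
    (∃ p', Adj D e a s p p') ∨ Par D e a s p r := by
  by_cases hc : ∃ x, (x, a, r) ∈ D ∧ key e s p < key e s x
  · left
    obtain ⟨y, hy, hmin⟩ := Set.exists_min_image
      {x | (x, a, r) ∈ D ∧ key e s p < key e s x} (key e s) (Set.toFinite _) hc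
    exact ⟨y, r, h, hy.1, hy.2, fun x hx hx' => hmin x ⟨hx, hx'⟩⟩
  · right
    push Not at hc
    exact ⟨h, hc⟩

lemma leaf_or_par [Finite Q] (a : A) (s : Bool) (r : Q) :
    Leaf D a r ∨ ∃ p, Par D e a s p r := by
  by_cases hc : ∃ x, (x, a, r) ∈ D
  · right
    obtain ⟨y, hy, hmax⟩ := Set.exists_max_image
      {x | (x, a, r) ∈ D} (key e s) (Set.toFinite _) hc
    exact ⟨y, hy, fun x hx => hmax x hx⟩
  · left
    push Not at hc
    exact hc

/-! ### Invariants. `m` is the main run. -/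

def Alive (D : Set (Q × A × Q)) (w : ℕ → A) (m : ℕ → Q) (i : ℕ) : Prop :=
  (m i, w i, m (i + 1)) ∈ D

/-- The node `(p, i)` lies strictly on side `d` of the main branch. -/
inductive Side (D : Set (Q × A × Q)) (e : Q → ℤ) (w : ℕ → A) (m : ℕ → Q) (d : Bool) :
    ℕ → Q → Prop
  | base (i : ℕ) (p : Q) : (∀ j ≤ i, Alive D w m j) → (p, w i, m (i + 1)) ∈ D →
      key e d (m i) < key e d p → Side D e w m d i p
  | step (i : ℕ) (p r : Q) : (p, w i, r) ∈ D → Side D e w m d (i + 1) r → Side D e w m d i p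

/-- Valid positions of the head on side `d`. -/
def UU (D : Set (Q × A × Q)) (e : Q → ℤ) (w : ℕ → A) (m : ℕ → Q) (d : Bool)
    (i : ℕ) (p : Q) (s : Bool) : Prop :=
  (p = m i ∧ s = d ∧ ∀ j < i, Alive D w m j) ∨ Side D e w m d i p

/-- The node `(p, i)` is below the main node at level `K`. -/
inductive Sub (D : Set (Q × A × Q)) (w : ℕ → A) (m : ℕ → Q) (K : ℕ) : ℕ → Q → Prop
  | base : Sub D w m K K (m K)
  | step (i : ℕ) (p r : Q) : (p, w i, r) ∈ D → Sub D w m K (i + 1) r → Sub D w m K i p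

variable {w : ℕ → A} {m : ℕ → Q}

lemma Side.alive {d : Bool} {i : ℕ} {p : Q} (h : Side D e w m d i p) :
    ∀ j ≤ i, Alive D w m j := by
  induction h with
  | base i p h _ _ => exact h
  | step i p r _ _ ih => exact fun j hj => ih j (by omega)

lemma Side.parent {d : Bool} {i : ℕ} {p : Q} (h : Side D e w m d i p) :
    ∃ r, (p, w i, r) ∈ D := by
  cases h with
  | base _ _ _ h _ => exact ⟨_, h⟩
  | step _ _ r h _ => exact ⟨r, h⟩

lemma UU.alive {d : Bool} {i : ℕ} {p : Q} {s : Bool} (h : UU D e w m d i p s) :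
    ∀ j < i, Alive D w m j := by
  rcases h with h | h
  · exact h.2.2
  · exact fun j hj => h.alive j hj.le

lemma UU.parent {d : Bool} {i : ℕ} {p : Q} {s : Bool} (h : UU D e w m d i p s)
    (ha : Alive D w m i) : ∃ r, (p, w i, r) ∈ D := by
  rcases h with h | h
  · exact ⟨_, h.1.symm ▸ (show (m i, w i, m (i + 1)) ∈ D from ha)⟩
  · exact h.parent

lemma Sub.le {K i : ℕ} {p : Q} (h : Sub D w m K i p) : i ≤ K := by
  induction h with
  | base => exact le_rfl
  | step _ _ _ _ _ ih => omega

lemma Sub.top {K : ℕ} {p : Q} (h : Sub D w m K K p) : p = m K := by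
  cases h with
  | base => rfl
  | step _ _ _ _ h => have := h.le; omega

lemma Sub.main (hal : ∀ i, Alive D w m i) (K i : ℕ) (h : i ≤ K) : Sub D w m K i (m i) := by
  induction h using Nat.decreasingInduction with
  | self => exact Sub.base
  | of_succ k hk ih => exact Sub.step k _ _ (hal k) ih

section

lemma Side.ne_main
    (hdet : ∀ p a q q', (p, a, q) ∈ D → (p, a, q') ∈ D → q = q')
    {d : Bool} {i : ℕ} {p : Q} (h : Side D e w m d i p) : p ≠ m i := by
  induction h with
  | base i p _ _ h => rintro rfl; omega
  | step i p r h hs ih =>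
    rintro rfl
    exact ih (hdet _ _ _ _ h (hs.alive i (by omega)))

lemma Side.disjoint
    (hdet : ∀ p a q q', (p, a, q) ∈ D → (p, a, q') ∈ D → q = q')
    {i : ℕ} {p : Q} (h : Side D e w m true i p) :
    ¬ Side D e w m false i p := by
  induction h with
  | base i p _ hp h =>
    intro h'
    cases h' with
    | base _ _ _ _ h' => simp [key] at h h'; omega
    | step _ _ r hr h' => exact h'.ne_main hdet (hdet _ _ _ _ hr hp)
  | step i p r h hs ih =>
    intro h'
    cases h' with
    | base _ _ _ h' _ => exact hs.ne_main hdet (hdet _ _ _ _ h h')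
    | step _ _ r' hr h' =>
      obtain rfl := hdet _ _ _ _ h hr
      exact ih h'

lemma UU.main
    (hdet : ∀ p a q q', (p, a, q) ∈ D → (p, a, q') ∈ D → q = q')
    {i : ℕ} {p : Q} {s t : Bool} (h : UU D e w m true i p s)
    (h' : UU D e w m false i p t) : p = m i := by
  rcases h with h | h
  · exact h.1
  rcases h' with h' | h'
  · exact h'.1
  exact absurd h' (h.disjoint hdet)

lemma UU.side_main
    (hdet : ∀ p a q q', (p, a, q) ∈ D → (p, a, q') ∈ D → q = q')
    {d : Bool} {i : ℕ} {s : Bool} (h : UU D e w m d i (m i) s) : s = d := by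
  rcases h with h | h
  · exact h.2.1
  · exact absurd rfl (h.ne_main hdet)

lemma UU.side_main'
    (hdet : ∀ p a q q', (p, a, q) ∈ D → (p, a, q') ∈ D → q = q')
    {d : Bool} {i : ℕ} {p : Q} {s : Bool} (h : UU D e w m d i p s)
    (hp : p = m i) : s = d := by
  subst hp
  exact h.side_main hdet

lemma UU.par
    (hdet : ∀ p a q q', (p, a, q) ∈ D → (p, a, q') ∈ D → q = q')
    {d : Bool} {i : ℕ} {p r : Q} {s : Bool} (h : UU D e w m d i p s)
    (hp : Par D e (w i) s p r) (hmain : (m i, w i, r) ∈ D → Alive D w m i) :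
    UU D e w m d (i + 1) r s := by
  rcases h with ⟨rfl, rfl, h⟩ | h
  · have ha := hmain hp.1
    refine Or.inl ⟨hdet _ _ _ _ hp.1 ha, rfl, fun j hj => ?_⟩
    rcases Nat.lt_succ_iff_lt_or_eq.1 hj with hj | rfl
    · exact h j hj
    · exact ha
  · cases h with
    | base _ _ hal h1 h2 =>
      obtain rfl := hdet _ _ _ _ h1 hp.1
      refine Or.inl ⟨rfl, ?_, fun j hj => hal j (by omega)⟩
      by_contra hs
      have hs : s = !d := by cases s <;> cases d <;> simp_all
      have := hp.2 _ (hal i le_rfl)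
      rw [hs, key_not, key_not] at this
      omega
    | step _ _ r' hr h =>
      obtain rfl := hdet _ _ _ _ hr hp.1
      exact Or.inr h

lemma UU.adj
    (hdet : ∀ p a q q', (p, a, q) ∈ D → (p, a, q') ∈ D → q = q')
    (he : Function.Injective e) {d : Bool} {i : ℕ} {p p' : Q} {s t : Bool}
    (h : UU D e w m d i p s) (hst : t = !s)
    (hp : Adj D e (w i) s p p') (hmain : ∀ r, (m i, w i, r) ∈ D → Alive D w m i) :
    UU D e w m d i p' t := by
  subst hst
  obtain ⟨r, h1, h2, h3, h4⟩ := hp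
  rcases h with ⟨rfl, rfl, h⟩ | h
  · have ha := hmain _ h1
    obtain rfl := hdet _ _ _ _ h1 ha
    refine Or.inr (Side.base _ _ (fun j hj => ?_) h2 h3)
    rcases Nat.le_iff_lt_or_eq.1 hj with hj | rfl
    · exact h j hj
    · exact ha
  · cases h with
    | base _ _ hal g1 g2 =>
      obtain rfl := hdet _ _ _ _ h1 g1
      by_cases hs : s = d
      · subst hs
        exact Or.inr (Side.base _ _ hal h2 (by omega))
      · have hs : s = !d := by cases s <;> cases d <;> simp_all
        subst hs
        have := h4 _ (hal i le_rfl) (by rw [key_not, key_not]; omega)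
        rw [key_not, key_not] at this
        by_cases hm : p' = m i
        · exact Or.inl ⟨hm, by simp, fun j hj => hal j hj.le⟩
        · have hne : key e d p' ≠ key e d (m i) := fun hh => hm (key_inj he d hh)
          exact Or.inr (Side.base _ _ hal h2 (by omega))
    | step _ _ r' hr h =>
      obtain rfl := hdet _ _ _ _ hr h1
      exact Or.inr (Side.step _ _ _ h2 h)

lemma UU.child
    (he : Function.Injective e) {d : Bool} {i : ℕ} {p r : Q} {s : Bool}
    (h : UU D e w m d (i + 1) r s) (hp : Par D e (w i) s p r) : UU D e w m d i p s := by
  rcases h with ⟨rfl, rfl, h⟩ | h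
  · by_cases hm : p = m i
    · exact Or.inl ⟨hm, rfl, fun j hj => h j (by omega)⟩
    · have hne : key e s p ≠ key e s (m i) := fun hh => hm (key_inj he s hh)
      have := hp.2 _ (h i (by omega))
      exact Or.inr (Side.base _ _ (fun j hj => h j (by omega)) hp.1 (by omega))
  · exact Or.inr (Side.step _ _ _ hp.1 h)

lemma UU.leaf
    {d : Bool} {i : ℕ} {r : Q} {s : Bool} (t : Bool)
    (h : UU D e w m d (i + 1) r s) (hp : Leaf D (w i) r) : UU D e w m d (i + 1) r t := by
  rcases h with ⟨rfl, rfl, h⟩ | h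
  · exact absurd (h i (by omega)) (hp _)
  · exact Or.inr h

lemma UU.zero
    {d : Bool} {r : Q} {s : Bool} (t : Bool)
    (h : UU D e w m d 0 r s) (hp : r ≠ m 0) : UU D e w m d 0 r t := by
  rcases h with ⟨rfl, rfl, h⟩ | h
  · exact absurd rfl hp
  · exact Or.inr h

lemma Sub.parent
    (hdet : ∀ p a q q', (p, a, q) ∈ D → (p, a, q') ∈ D → q = q')
    {K i : ℕ} {p r : Q} (h : Sub D w m K i p) (hi : i < K)
    (hp : (p, w i, r) ∈ D) : Sub D w m K (i + 1) r := by
  cases h with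
  | base => omega
  | step _ _ r' hr h =>
    obtain rfl := hdet _ _ _ _ hr hp
    exact h

lemma Sub.adj
    (hdet : ∀ p a q q', (p, a, q) ∈ D → (p, a, q') ∈ D → q = q')
    {K i : ℕ} {p p' : Q} {s : Bool} (h : Sub D w m K i p) (hi : i < K)
    (hp : Adj D e (w i) s p p') : Sub D w m K i p' := by
  obtain ⟨r, h1, h2, -⟩ := hp
  exact Sub.step _ _ _ h2 (h.parent hdet hi h1)

end

end Construction

/-! ### General lemmas -/

lemma infOften_comp {X Y : Type} [Finite X] (tr : ℕ → X) (f : X → Y) (y : Y) :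
    (∃ t, InfOften tr t ∧ f t = y) ↔ InfOften (fun i => f (tr i)) y := by
  constructor
  · rintro ⟨t, ht, rfl⟩ n
    obtain ⟨i, hi, rfl⟩ := ht n
    exact ⟨i, hi, rfl⟩
  · intro h
    by_contra hc
    push Not at hc
    have hc' : ∀ t, ∃ n, f t = y → ∀ i, n ≤ i → tr i ≠ t := by
      intro t
      by_cases hft : f t = y
      · have : ¬ InfOften tr t := fun hh => hc t hh hft
        unfold InfOften at this
        push Not at this
        obtain ⟨n, hn⟩ := this
        exact ⟨n, fun _ => hn⟩
      · exact ⟨0, fun h => absurd h hft⟩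
    choose N hN using hc'
    obtain ⟨b, hb⟩ := (Set.finite_range N).bddAbove
    obtain ⟨i, hi, hy⟩ := h b
    exact hN (tr i) hy i (le_trans (hb ⟨_, rfl⟩) hi) rfl

lemma exists_infOften {X : Type} [Finite X] (tr : ℕ → X) : ∃ t, InfOften tr t := by
  obtain ⟨t, ht, -⟩ := (infOften_comp tr (fun _ => ()) ()).2 (fun n => ⟨n, le_rfl, rfl⟩)
  exact ⟨t, ht⟩

lemma sInf_eq_of_subseq (c c' : ℕ → ℕ) (g : ℕ → ℕ) (hg : StrictMono g) (M : ℕ)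
    (h1 : ∀ i, c' (g i) = c i) (h2 : ∀ j, (∀ i, j ≠ g i) → c' j = M) (hM : ∀ i, c i ≤ M)
    (hne : ∃ y, InfOften c y) :
    sInf {y | InfOften c' y} = sInf {y | InfOften c y} := by
  have hmem : InfOften c (sInf {y | InfOften c y}) := Nat.sInf_mem (s := {y | InfOften c y}) hne
  apply le_antisymm
  · apply Nat.sInf_le
    intro n
    obtain ⟨i, hi, h⟩ := hmem n
    exact ⟨g i, hi.trans hg.le_apply, (h1 i).trans h⟩
  · have hsub : ∀ y, InfOften c y → InfOften c' y := by
      intro y hy n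
      obtain ⟨i, hi, h⟩ := hy n
      exact ⟨g i, hi.trans hg.le_apply, (h1 i).trans h⟩
    have hne' : ∃ y, InfOften c' y := hne.imp hsub
    have hmem' : InfOften c' (sInf {y | InfOften c' y}) :=
      Nat.sInf_mem (s := {y | InfOften c' y}) hne'
    set y := sInf {y | InfOften c' y} with hy
    by_cases hyM : y = M
    · obtain ⟨i, -, hi⟩ := hmem 0
      rw [hyM, ← hi]
      exact hM i
    · apply Nat.sInf_le
      intro n
      obtain ⟨j, hj, hcj⟩ := hmem' (g n)
      by_cases hex : ∃ i, j = g i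
      · obtain ⟨i, rfl⟩ := hex
        exact ⟨i, hg.le_iff_le.1 hj, (h1 i).symm.trans hcj⟩
      · push Not at hex
        exact absurd (hcj.symm.trans (h2 j hex)) hyM

lemma prefixCat_subseq {C : Type} (f f' : ℕ → List C) (g : ℕ → ℕ) (hg : StrictMono g)
    (h1 : ∀ i, f' (g i) = f i) (h2 : ∀ j, (∀ i, j ≠ g i) → f' j = []) (n : ℕ) :
    ∃ k, (∀ i, i < k ↔ g i < n) ∧ prefixCat f' n = prefixCat f k := by
  induction n with
  | zero => exact ⟨0, by simp, rfl⟩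
  | succ n ih =>
    obtain ⟨k, hk, hpre⟩ := ih
    by_cases hex : ∃ i, n = g i
    · obtain ⟨i, rfl⟩ := hex
      have hki : k = i := by
        apply le_antisymm
        · by_contra hlt
          exact lt_irrefl _ ((hk i).1 (by omega))
        · by_contra hlt
          exact lt_irrefl _ ((hk k).2 (hg (by omega)))
      subst hki
      refine ⟨k + 1, fun i => ?_, ?_⟩
      · rw [Nat.lt_succ_iff, Nat.lt_succ_iff, hg.le_iff_le]
      · simp only [prefixCat, hpre, h1]
    · push Not at hex
      refine ⟨k, fun i => ?_, ?_⟩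
      · rw [hk]
        have := hex i
        omega
      · simp only [prefixCat, hpre, h2 n hex, List.append_nil]

lemma flattenTo_subseq {C : Type} (f f' : ℕ → List C) (g : ℕ → ℕ) (hg : StrictMono g)
    (h1 : ∀ i, f' (g i) = f i) (h2 : ∀ j, (∀ i, j ≠ g i) → f' j = []) (x : ℕ → C) :
    FlattenTo f' x ↔ FlattenTo f x := by
  have key1 := prefixCat_subseq f f' g hg h1 h2
  have key2 : ∀ k, prefixCat f' (g k) = prefixCat f k := by
    intro k
    obtain ⟨k', hk, hpre⟩ := key1 (g k)
    have : k' = k := by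
      apply le_antisymm
      · by_contra hlt
        exact lt_irrefl _ ((hk k).1 (by omega))
      · by_contra hlt
        exact lt_irrefl _ ((hk k').2 (hg (by omega)))
    rw [hpre, this]
  constructor
  · rintro ⟨ha, hb⟩
    refine ⟨fun n => key2 n ▸ ha _, fun n => ?_⟩
    obtain ⟨j, hj⟩ := hb n
    obtain ⟨k, -, hk⟩ := key1 j
    exact ⟨k, hk ▸ hj⟩
  · rintro ⟨ha, hb⟩
    refine ⟨fun n => ?_, fun n => ?_⟩
    · obtain ⟨k, -, hk⟩ := key1 n
      exact hk ▸ ha _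
    · obtain ⟨k, hk⟩ := hb n
      exact ⟨g k, by rw [key2]; exact hk⟩

end Paper

namespace Paper

section Machine

variable {A B : Type}

/-- Steps of the reversible machine on configurations. -/
inductive Stp {Q : Type} (D : Set (Q × A × Q)) (e : Q → ℤ) (q0 : Q) (w : ℕ → A) :
    ((Q × Bool) × (Q × Bool)) × ℕ → ((Q × Bool) × (Q × Bool)) × ℕ → Prop
  | rr (i : ℕ) (p q p' q' : Q) (s t : Bool) : t = !s → Par D e (w i) s p p' →
      Par D e (w i) t q q' →
      Stp D e q0 w (((p, s), (q, t)), i) (((p', s), (q', t)), i + 1)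
  | r1 (i : ℕ) (p q p' : Q) (s t : Bool) : t = !s → Adj D e (w i) s p p' →
      Stp D e q0 w (((p, s), (q, t)), i) (((p', t), (q, t)), i)
  | r2 (i : ℕ) (p q x q' : Q) (s t : Bool) : t = !s → Par D e (w i) s p x →
      Adj D e (w i) t q q' →
      Stp D e q0 w (((p, s), (q, t)), i) (((p, s), (q', s)), i)
  | ll (i : ℕ) (p q p' q' : Q) (s : Bool) : Par D e (w i) s p' p → Par D e (w i) s q' q →
      Stp D e q0 w (((p, s), (q, s)), i + 1) (((p', s), (q', s)), i)
  | l1 (i : ℕ) (p q : Q) (s t : Bool) : t = !s → Leaf D (w i) p →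
      Stp D e q0 w (((p, s), (q, s)), i + 1) (((p, t), (q, s)), i + 1)
  | l2 (i : ℕ) (p q x : Q) (s t : Bool) : t = !s → Par D e (w i) s x p → Leaf D (w i) q →
      Stp D e q0 w (((p, s), (q, s)), i + 1) (((p, s), (q, t)), i + 1)
  | m1 (p q : Q) (s t : Bool) : t = !s → p ≠ q0 →
      Stp D e q0 w (((p, s), (q, s)), 0) (((p, t), (q, s)), 0)
  | m2 (p q : Q) (s t : Bool) : t = !s → p = q0 → q ≠ q0 →
      Stp D e q0 w (((p, s), (q, s)), 0) (((p, s), (q, t)), 0)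

/-- The letter read by a step that arrives in a given configuration. -/
def lett {Q : Type} (w : ℕ → A) (c : ((Q × Bool) × (Q × Bool)) × ℕ) : Option A :=
  if c.1.1.2 = c.1.2.2 then some (w c.2) else
    match c.2 with
    | 0 => none
    | i + 1 => some (w i)

def prevPos {Q : Type} (x : (Q × Bool) × (Q × Bool)) (c : ((Q × Bool) × (Q × Bool)) × ℕ) : ℕ :=
  if c.1.1.2 = c.1.2.2 then (if x.1.2 = x.2.2 then c.2 + 1 else c.2) else
    (if x.1.2 = x.2.2 then c.2 else c.2 - 1)

section
variable {Q : Type} {D : Set (Q × A × Q)} {e : Q → ℤ} {q0 : Q} {w : ℕ → A} {m : ℕ → Q}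

lemma Stp.rev {c c' : ((Q × Bool) × (Q × Bool)) × ℕ} (h : Stp D e q0 w c c') :
    RevTr D e q0 c.1 (lett w c') c'.1 ∧ c.2 = prevPos c.1 c' := by
  cases h with
  | rr i p q p' q' s t hst h1 h2 =>
    subst hst; simp only [lett, prevPos]; simp; exact RevTr.rr _ _ _ _ _ _ _ rfl h1 h2
  | r1 i p q p' s t hst h1 =>
    subst hst; simp only [lett, prevPos]; simp; exact RevTr.r1 _ _ _ _ _ _ rfl h1
  | r2 i p q x q' s t hst h1 h2 =>
    subst hst; simp only [lett, prevPos]; simp; exact RevTr.r2 _ _ _ _ _ _ _ rfl h1 h2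
  | ll i p q p' q' s h1 h2 =>
    simp only [lett, prevPos]; simp; exact RevTr.ll _ _ _ _ _ _ h1 h2
  | l1 i p q s t hst h1 =>
    subst hst; simp only [lett, prevPos]; simp; exact RevTr.l1 _ _ _ _ _ rfl h1
  | l2 i p q x s t hst h1 h2 =>
    subst hst; simp only [lett, prevPos]; simp; exact RevTr.l2 _ _ _ _ _ _ rfl h1 h2
  | m1 p q s t hst h1 =>
    subst hst; simp only [lett, prevPos]; simp; exact RevTr.m1 _ _ _ _ rfl h1
  | m2 p q s t hst h1 h2 =>
    subst hst; simp only [lett, prevPos]; simp; exact RevTr.m2 _ _ _ _ rfl h1 h2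

lemma Stp.inj (he : Function.Injective e)
    (hdet : ∀ p a q q', (p, a, q) ∈ D → (p, a, q') ∈ D → q = q')
    {c d c' : ((Q × Bool) × (Q × Bool)) × ℕ} (h : Stp D e q0 w c c')
    (h' : Stp D e q0 w d c') : c = d := by
  obtain ⟨h1, h2⟩ := h.rev
  obtain ⟨g1, g2⟩ := h'.rev
  have := RevTr.codet he hdet h1 g1
  exact Prod.ext this (by rw [h2, g2, this])

lemma Stp.not_init {c : ((Q × Bool) × (Q × Bool)) × ℕ}
    (h : Stp D e q0 w c (((q0, true), (q0, false)), 0)) : False := by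
  cases h <;> simp_all

/-- Both heads are on their side of the main branch. -/
def Inv (D : Set (Q × A × Q)) (e : Q → ℤ) (w : ℕ → A) (m : ℕ → Q)
    (c : ((Q × Bool) × (Q × Bool)) × ℕ) : Prop :=
  UU D e w m true c.2 c.1.1.1 c.1.1.2 ∧ UU D e w m false c.2 c.1.2.1 c.1.2.2

lemma Inv.step (he : Function.Injective e)
    (hdet : ∀ p a q q', (p, a, q) ∈ D → (p, a, q') ∈ D → q = q') (hm0 : m 0 = q0)
    (hm : ∀ i r, (m i, w i, r) ∈ D → Alive D w m i)
    {c c' : ((Q × Bool) × (Q × Bool)) × ℕ} (hi : Inv D e w m c) (h : Stp D e q0 w c c') :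
    Inv D e w m c' := by
  obtain ⟨hu, hl⟩ := hi
  cases h with
  | rr i p q p' q' s t hst h1 h2 => exact ⟨hu.par hdet h1 (hm i _), hl.par hdet h2 (hm i _)⟩
  | r1 i p q p' s t hst h1 => exact ⟨hu.adj hdet he hst h1 (hm i), hl⟩
  | r2 i p q x q' s t hst h1 h2 =>
    exact ⟨hu, hl.adj hdet he (by rw [hst, Bool.not_not]) h2 (hm i)⟩
  | ll i p q p' q' s h1 h2 => exact ⟨hu.child he h1, hl.child he h2⟩
  | l1 i p q s t hst h1 => exact ⟨hu.leaf _ h1, hl⟩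
  | l2 i p q x s t hst h1 h2 => exact ⟨hu, hl.leaf _ h2⟩
  | m1 p q s t hst h1 => exact ⟨hu.zero _ (by rw [hm0]; exact h1), hl⟩
  | m2 p q s t hst h1 h2 => exact ⟨hu, hl.zero _ (by rw [hm0]; exact h2)⟩

lemma Inv.progress [Finite Q]
    (hdet : ∀ p a q q', (p, a, q) ∈ D → (p, a, q') ∈ D → q = q') (hm0 : m 0 = q0)
    (hal : ∀ i, Alive D w m i)
    {c : ((Q × Bool) × (Q × Bool)) × ℕ} (hi : Inv D e w m c) :
    ∃ c', Stp D e q0 w c c' := by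
  obtain ⟨⟨⟨p, s⟩, ⟨q, t⟩⟩, i⟩ := c
  obtain ⟨hu, hl⟩ := hi
  by_cases hst : s = t
  · subst hst
    cases i with
    | zero =>
      by_cases hp : p = q0
      · by_cases hq : q = q0
        · exfalso
          have h1 : s = true := by
            apply hu.side_main' hdet
            simp [hp, hm0]
          have h2 : s = false := by
            apply hl.side_main' hdet
            simp [hq, hm0]
          simp_all
        · exact ⟨_, Stp.m2 _ _ _ _ rfl hp hq⟩
      · exact ⟨_, Stp.m1 _ _ _ _ rfl hp⟩
    | succ i =>
      rcases leaf_or_par (D := D) (e := e) (w i) s p with h1 | ⟨p', h1⟩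
      · exact ⟨_, Stp.l1 _ _ _ _ _ rfl h1⟩
      rcases leaf_or_par (D := D) (e := e) (w i) s q with h2 | ⟨q', h2⟩
      · exact ⟨_, Stp.l2 _ _ _ _ _ _ rfl h1 h2⟩
      exact ⟨_, Stp.ll _ _ _ _ _ _ h1 h2⟩
  · have hst : t = !s := by cases s <;> cases t <;> simp_all
    obtain ⟨r, hr⟩ := hu.parent (hal i)
    obtain ⟨r', hr'⟩ := hl.parent (hal i)
    rcases exists_adj_or_par (e := e) s hr with ⟨p', h1⟩ | h1
    · exact ⟨_, Stp.r1 _ _ _ _ _ _ hst h1⟩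
    rcases exists_adj_or_par (e := e) t hr' with ⟨q', h2⟩ | h2
    · exact ⟨_, Stp.r2 _ _ _ _ _ _ _ hst h1 h2⟩
    exact ⟨_, Stp.rr _ _ _ _ _ _ _ hst h1 h2⟩

/-- Both heads are below the main node at level `K`. -/
def Below (D : Set (Q × A × Q)) (w : ℕ → A) (m : ℕ → Q) (K : ℕ)
    (c : ((Q × Bool) × (Q × Bool)) × ℕ) : Prop :=
  Sub D w m K c.2 c.1.1.1 ∧ Sub D w m K c.2 c.1.2.1

lemma Below.step
    (hdet : ∀ p a q q', (p, a, q) ∈ D → (p, a, q') ∈ D → q = q') {K : ℕ}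
    {c c' : ((Q × Bool) × (Q × Bool)) × ℕ} (hi : Below D w m K c) (hlt : c.2 < K)
    (h : Stp D e q0 w c c') : Below D w m K c' := by
  obtain ⟨hu, hl⟩ := hi
  cases h with
  | rr i p q p' q' s t hst h1 h2 => exact ⟨hu.parent hdet hlt h1.1, hl.parent hdet hlt h2.1⟩
  | r1 i p q p' s t hst h1 => exact ⟨hu.adj hdet hlt h1, hl⟩
  | r2 i p q x q' s t hst h1 h2 => exact ⟨hu, hl.adj hdet hlt h2⟩
  | ll i p q p' q' s h1 h2 => exact ⟨Sub.step _ _ _ h1.1 hu, Sub.step _ _ _ h2.1 hl⟩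
  | l1 i p q s t hst h1 => exact ⟨hu, hl⟩
  | l2 i p q x s t hst h1 h2 => exact ⟨hu, hl⟩
  | m1 p q s t hst h1 => exact ⟨hu, hl⟩
  | m2 p q s t hst h1 h2 => exact ⟨hu, hl⟩

/-- Main analysis of infinite runs. -/
lemma run_analysis [Finite Q] (he : Function.Injective e)
    (hdet : ∀ p a q q', (p, a, q) ∈ D → (p, a, q') ∈ D → q = q') (hm0 : m 0 = q0)
    (hal : ∀ i, Alive D w m i)
    (cfg : ℕ → ((Q × Bool) × (Q × Bool)) × ℕ)
    (h0 : cfg 0 = (((q0, true), (q0, false)), 0))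
    (hs : ∀ i, Stp D e q0 w (cfg i) (cfg (i + 1)))
    (hinv : ∀ i, Inv D e w m (cfg i)) :
    (∀ K, ∃ i, K ≤ (cfg i).2) ∧
    ∃ g : ℕ → ℕ, StrictMono g ∧ (∀ i, cfg (g i) = (((m i, true), (m i, false)), i)) ∧
      ∀ j p, (cfg j).1 = ((p, true), (p, false)) → ∃ i, j = g i := by
  have hne : ∀ i j, i < j → cfg i ≠ cfg j := by
    intro i
    induction i with
    | zero =>
      intro j hj heq
      obtain ⟨j, rfl⟩ := Nat.exists_eq_succ_of_ne_zero hj.ne'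
      have := hs j
      rw [← Nat.succ_eq_add_one, ← heq, h0] at this
      exact this.not_init
    | succ i ih =>
      intro j hj heq
      obtain ⟨j, rfl⟩ := Nat.exists_eq_succ_of_ne_zero (show j ≠ 0 by omega)
      have h1 := hs j
      rw [← Nat.succ_eq_add_one, ← heq] at h1
      exact ih j (by omega) ((hs i).inj he hdet h1)
  have hinj : Function.Injective cfg := by
    intro i j hij
    rcases lt_trichotomy i j with h | h | h
    · exact absurd hij (hne _ _ h)
    · exact h
    · exact absurd hij.symm (hne _ _ h)
  have hunb : ∀ K, ∃ i, K ≤ (cfg i).2 := by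
    intro K
    by_contra hc
    push Not at hc
    exact Set.infinite_of_injective_forall_mem (s := Set.univ ×ˢ Set.Iio K) hinj
      (fun i => ⟨trivial, hc i⟩) (Set.finite_univ.prod (Set.finite_Iio K))
  refine ⟨hunb, ?_⟩
  classical
  let g : ℕ → ℕ := fun K => Nat.find (hunb K)
  have hbelow : ∀ K j, j ≤ g K → Below D w m K (cfg j) := by
    intro K j
    induction j with
    | zero =>
      intro _
      rw [h0, ← hm0]
      exact ⟨Sub.main hal K 0 (by omega), Sub.main hal K 0 (by omega)⟩
    | succ j ih =>
      intro hj
      have : (cfg j).2 < K := by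
        have := Nat.find_min (hunb K) (show j < g K by omega)
        omega
      exact (ih (by omega)).step hdet this (hs j)
  have hg : ∀ i, cfg (g i) = (((m i, true), (m i, false)), i) := by
    intro i
    have h1 := hbelow i (g i) le_rfl
    have h2 := hinv (g i)
    have h3 : i ≤ (cfg (g i)).2 := Nat.find_spec (hunb i)
    rcases hc : cfg (g i) with ⟨⟨⟨p, s⟩, ⟨q, t⟩⟩, k⟩
    rw [hc] at h1 h2 h3
    have hk : k = i := le_antisymm h1.1.le h3
    subst hk
    have hp : p = m k := h1.1.top
    have hq : q = m k := h1.2.top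
    subst hp hq
    have e1 : s = true := h2.1.side_main hdet
    have e2 : t = false := h2.2.side_main hdet
    rw [e1, e2]
  refine ⟨g, strictMono_nat_of_lt_succ fun i => ?_, hg, fun j p hj => ?_⟩
  · have h1 : g i ≤ g (i + 1) := Nat.find_min' _ (by
      have := hg (i + 1)
      rw [this]; simp)
    refine lt_of_le_of_ne h1 fun heq => ?_
    have h2 := hg i
    rw [heq, hg (i + 1)] at h2
    simp at h2
  · refine ⟨(cfg j).2, hinj ?_⟩
    rw [hg]
    have h2 := hinv j
    have hp : p = m (cfg j).2 := by
      obtain ⟨h3, h4⟩ := h2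
      rw [hj] at h3 h4
      exact h3.main hdet h4
    exact Prod.ext (by rw [hj, ← hp]) rfl

open Classical in
noncomputable def nxt (D : Set (Q × A × Q)) (p : Q) (a : A) : Q :=
  if h : ∃ r, (p, a, r) ∈ D then h.choose else p

lemma nxt_mem {p r : Q} {a : A} (h : (p, a, r) ∈ D) : (p, a, nxt D p a) ∈ D := by
  have h' : ∃ r, (p, a, r) ∈ D := ⟨r, h⟩
  rw [nxt, dif_pos h']
  exact h'.choose_spec

noncomputable def mainRun (D : Set (Q × A × Q)) (q0 : Q) (w : ℕ → A) : ℕ → Q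
  | 0 => q0
  | i + 1 => nxt D (mainRun D q0 w i) (w i)

lemma mainRun_alive (i : ℕ) (r : Q) (h : (mainRun D q0 w i, w i, r) ∈ D) :
    Alive D w (mainRun D q0 w) i := nxt_mem h

end

open Classical in
/-- The reversible transducer. -/
noncomputable def revTrans [Fintype A] (T : OnewayTrans A B) (e : T.Q → ℤ) :
    TwoWayTrans A B where
  Q := (T.Q × Bool) × (T.Q × Bool)
  finQ := inferInstance
  fwd x := x.1.2 ≠ x.2.2
  init := ((T.init, true), (T.init, false))
  init_fwd := by simp
  Δ := {t | RevTr T.Δ e T.init t.1 t.2.1 t.2.2}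
  marker := by
    intro p q h
    simp only [Set.mem_ofPred_eq] at h
    cases h <;> simp_all
  CIdx := T.CIdx
  finC := inferInstance
  color c t := match t.2.1 with
    | some a => if t.1 = ((t.1.1.1, true), (t.1.1.1, false)) then
        T.color c (t.1.1.1, a, nxt T.Δ t.1.1.1 a) else 2 * ∑ t, T.color c t
    | none => 2 * ∑ t, T.color c t
  out t := match t.2.1 with
    | some a => if t.1 = ((t.1.1.1, true), (t.1.1.1, false)) then
        T.out (t.1.1.1, a, nxt T.Δ t.1.1.1 a) else []
    | none => []

lemma stepVia_stp [Fintype A] (T : OnewayTrans A B) (e : T.Q → ℤ) (w : ℕ → A)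
    {c c' : ((T.Q × Bool) × (T.Q × Bool)) × ℕ} {t}
    (h : StepVia (revTrans T e).toTwoWayAut w c t c') : Stp T.Δ e T.init w c c' := by
  obtain ⟨x, i⟩ := c
  obtain ⟨y, j⟩ := c'
  obtain ⟨x', a, y'⟩ := t
  obtain ⟨h1, h2, h3, h4⟩ := h
  dsimp only at h2 h3
  subst h2 h3
  change RevTr T.Δ e T.init x' a y' at h1
  change (x'.1.2 ≠ x'.2.2 ∧ a = some (w i) ∧
      (y'.1.2 ≠ y'.2.2 ∧ j = i + 1 ∨ ¬ y'.1.2 ≠ y'.2.2 ∧ j = i)) ∨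
    (¬ x'.1.2 ≠ x'.2.2 ∧ 0 < i ∧ a = some (w (i - 1)) ∧
      (y'.1.2 ≠ y'.2.2 ∧ j = i ∨ ¬ y'.1.2 ≠ y'.2.2 ∧ j = i - 1)) ∨
    (¬ x'.1.2 ≠ x'.2.2 ∧ i = 0 ∧ a = none ∧ j = 0) at h4
  cases h1 with
  | rr a p q p' q' s t hst h1 h2 =>
    subst hst
    simp at h4
    obtain ⟨rfl, rfl⟩ := h4
    exact Stp.rr _ _ _ _ _ _ _ rfl h1 h2
  | r1 a p q p' s t hst h1 =>
    subst hst
    simp at h4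
    obtain ⟨rfl, rfl⟩ := h4
    exact Stp.r1 _ _ _ _ _ _ rfl h1
  | r2 a p q x q' s t hst h1 h2 =>
    subst hst
    simp at h4
    obtain ⟨rfl, rfl⟩ := h4
    exact Stp.r2 _ _ _ _ _ _ _ rfl h1 h2
  | ll a p q p' q' s h1 h2 =>
    cases i <;> simp at h4
    obtain ⟨rfl, rfl⟩ := h4
    exact Stp.ll _ _ _ _ _ _ h1 h2
  | l1 a p q s t hst h1 =>
    subst hst
    cases i <;> simp at h4
    obtain ⟨rfl, rfl⟩ := h4
    exact Stp.l1 _ _ _ _ _ rfl h1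
  | l2 a p q x s t hst h1 h2 =>
    subst hst
    cases i <;> simp at h4
    obtain ⟨rfl, rfl⟩ := h4
    exact Stp.l2 _ _ _ _ _ _ rfl h1 h2
  | m1 p q s t hst h1 =>
    simp at h4
    obtain ⟨rfl, rfl⟩ := h4
    exact Stp.m1 _ _ _ _ hst h1
  | m2 p q s t hst h1 h2 =>
    simp at h4
    obtain ⟨rfl, rfl⟩ := h4
    exact Stp.m2 _ _ _ _ hst h1 h2

lemma stp_stepVia [Fintype A] (T : OnewayTrans A B) (e : T.Q → ℤ) (w : ℕ → A)
    {c c' : ((T.Q × Bool) × (T.Q × Bool)) × ℕ} (h : Stp T.Δ e T.init w c c') :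
    StepVia (revTrans T e).toTwoWayAut w c (c.1, lett w c', c'.1) c' := by
  refine ⟨h.rev.1, rfl, rfl, ?_⟩
  change (c.1.1.2 ≠ c.1.2.2 ∧ lett w c' = some (w c.2) ∧
      (c'.1.1.2 ≠ c'.1.2.2 ∧ c'.2 = c.2 + 1 ∨ ¬ c'.1.1.2 ≠ c'.1.2.2 ∧ c'.2 = c.2)) ∨
    (¬ c.1.1.2 ≠ c.1.2.2 ∧ 0 < c.2 ∧ lett w c' = some (w (c.2 - 1)) ∧
      (c'.1.1.2 ≠ c'.1.2.2 ∧ c'.2 = c.2 ∨ ¬ c'.1.1.2 ≠ c'.1.2.2 ∧ c'.2 = c.2 - 1)) ∨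
    (¬ c.1.1.2 ≠ c.1.2.2 ∧ c.2 = 0 ∧ lett w c' = none ∧ c'.2 = 0)
  cases h <;> simp_all [lett]

/-- In an infinite run with all main transitions alive, acceptance and output agree. -/
lemma run_equiv [Fintype A] (T : OnewayTrans A B) (e : T.Q → ℤ) (he : Function.Injective e)
    (hdet : OnewayDet T.toOnewayAut) (w : ℕ → A)
    (cfg : ℕ → ((T.Q × Bool) × (T.Q × Bool)) × ℕ) (tr)
    (hrun : IsRun (revTrans T e).toTwoWayAut w cfg tr)
    (hal : ∀ i, Alive T.Δ w (mainRun T.Δ T.init w) i)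
    (hinv : ∀ i, Inv T.Δ e w (mainRun T.Δ T.init w) (cfg i)) :
    ReadsWhole (revTrans T e).toTwoWayAut cfg ∧
    (ParityCond (revTrans T e).toParityAut tr ↔
      OnewayParityCond T.toOnewayAut (fun i => (mainRun T.Δ T.init w i, w i,
        mainRun T.Δ T.init w (i + 1)))) ∧
    ∀ x, FlattenTo (fun i => (revTrans T e).out (tr i)) x ↔
      FlattenTo (fun i => T.out (mainRun T.Δ T.init w i, w i, mainRun T.Δ T.init w (i + 1))) x := by
  set m := mainRun T.Δ T.init w with hm
  obtain ⟨h0, hs⟩ := hrun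
  obtain ⟨hunb, g, hg, hgc, hgo⟩ := run_analysis he hdet (m := m) (q0 := T.init) (w := w) rfl hal
    cfg h0 (fun i => stepVia_stp T e w (hs i)) hinv
  have htr : ∀ j, (tr j).1 = (cfg j).1 := fun j => (hs j).2.1
  have hmain : ∀ i, (tr (g i)).1 = ((m i, true), (m i, false)) ∧ (tr (g i)).2.1 = some (w i) := by
    intro i
    have h1 := htr (g i)
    have h2 := hs (g i)
    rw [hgc] at h1 h2
    refine ⟨h1, ?_⟩
    rcases h2.2.2.2 with h | h | h
    · exact h.2.1
    · exact absurd (show true ≠ false by simp) h.1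
    · exact absurd (show true ≠ false by simp) h.1
  have hother : ∀ j, (∀ i, j ≠ g i) → (tr j).1 ≠ (((tr j).1.1.1, true), ((tr j).1.1.1, false)) := by
    intro j hj heq
    rw [htr] at heq
    obtain ⟨i, hi⟩ := hgo j _ heq
    exact hj i hi
  refine ⟨hunb, ?_, fun x => ?_⟩
  · refine forall_congr' fun c => ?_
    have hfin : Finite ((revTrans T e).Q × Option A × (revTrans T e).Q) := inferInstance
    simp only [infOften_comp]
    have := sInf_eq_of_subseq (fun i => T.color c (m i, w i, m (i + 1)))
      (fun j => (revTrans T e).color c (tr j)) g hg (2 * ∑ t, T.color c t) ?_ ?_ ?_ ?_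
    · rw [this]
    · intro i
      obtain ⟨h1, h2⟩ := hmain i
      simp only [revTrans]
      rw [h2]
      simp only [h1]
      simp [hm, mainRun]
    · intro j hj
      have h1 := hother j hj
      simp only [revTrans]
      split
      · exact if_neg h1
      · rfl
    · intro i
      have := Finset.single_le_sum (f := fun t => T.color c t) (fun t _ => Nat.zero_le _)
        (Finset.mem_univ (m i, w i, m (i + 1)))
      change T.color c (m i, w i, m (i + 1)) ≤ 2 * ∑ t, T.color c t
      change T.color c (m i, w i, m (i + 1)) ≤ ∑ t, T.color c t at this
      omega
    · obtain ⟨t, ht⟩ := exists_infOften (fun i => (m i, w i, m (i + 1)))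
      exact ⟨T.color c t, (infOften_comp _ _ _).1 ⟨t, ht, rfl⟩⟩
  · apply flattenTo_subseq _ _ g hg
    · intro i
      obtain ⟨h1, h2⟩ := hmain i
      simp only [revTrans]
      rw [h2]
      simp only [h1]
      simp [hm, mainRun]
    · intro j hj
      have h1 := hother j hj
      simp only [revTrans]
      split
      · exact if_neg h1
      · rfl

lemma inv_init {Q : Type} (D : Set (Q × A × Q)) (e : Q → ℤ) (w : ℕ → A) (q0 : Q) :
    Inv D e w (mainRun D q0 w) (((q0, true), (q0, false)), 0) :=
  ⟨Or.inl ⟨rfl, rfl, by simp⟩, Or.inl ⟨rfl, rfl, by simp⟩⟩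

lemma run_eq_main (T : OnewayTrans A B) (hdet : OnewayDet T.toOnewayAut) (w : ℕ → A)
    (s : ℕ → T.Q) (hs : OnewayRun T.toOnewayAut w s) : s = mainRun T.Δ T.init w := by
  funext i
  induction i with
  | zero => exact hs.1
  | succ i ih =>
    have h := hs.2 i
    refine hdet _ _ _ _ h ?_
    rw [ih] at h ⊢
    exact nxt_mem h

lemma revTrans_realizes [Fintype A] (T : OnewayTrans A B) (e : T.Q → ℤ)
    (he : Function.Injective e) (hdet : OnewayDet T.toOnewayAut) (w : ℕ → A) (x : ℕ → B) :
    (revTrans T e).Realizes w x ↔ T.Realizes w x := by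
  have hstep : ∀ c c', Inv T.Δ e w (mainRun T.Δ T.init w) c → Stp T.Δ e T.init w c c' →
      Inv T.Δ e w (mainRun T.Δ T.init w) c' := fun c c' hi h =>
    hi.step he hdet rfl (fun i r h => mainRun_alive i r h) h
  constructor
  · rintro ⟨cfg, tr, hrun, hwhole, hpar, hout⟩
    have hinv : ∀ i, Inv T.Δ e w (mainRun T.Δ T.init w) (cfg i) := by
      intro i
      induction i with
      | zero => rw [hrun.1]; exact inv_init _ _ _ _
      | succ i ih => exact hstep _ _ ih (stepVia_stp T e w (hrun.2 i))
    have hal : ∀ i, Alive T.Δ w (mainRun T.Δ T.init w) i := by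
      intro i
      obtain ⟨j, hj⟩ := hwhole (i + 1)
      exact (hinv j).1.alive i hj
    obtain ⟨-, h1, h2⟩ := run_equiv T e he hdet w cfg tr hrun hal hinv
    exact ⟨mainRun T.Δ T.init w, ⟨rfl, hal⟩, h1.1 hpar, (h2 x).1 hout⟩
  · rintro ⟨s, hrun, hpar, hout⟩
    obtain rfl := run_eq_main T hdet w s hrun
    have hal : ∀ i, Alive T.Δ w (mainRun T.Δ T.init w) i := hrun.2
    have hprog : ∀ c : {c // Inv T.Δ e w (mainRun T.Δ T.init w) c},
        ∃ c' : {c // Inv T.Δ e w (mainRun T.Δ T.init w) c}, Stp T.Δ e T.init w c.1 c'.1 := by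
      rintro ⟨c, hc⟩
      obtain ⟨c', h⟩ := hc.progress hdet (q0 := T.init) rfl hal
      exact ⟨⟨c', hstep _ _ hc h⟩, h⟩
    choose F hF using hprog
    let cs : ℕ → {c // Inv T.Δ e w (mainRun T.Δ T.init w) c} := fun n =>
      Nat.rec ⟨_, inv_init T.Δ e w T.init⟩ (fun _ c => F c) n
    have hcs : ∀ n, Stp T.Δ e T.init w (cs n).1 (cs (n + 1)).1 := fun n => hF (cs n)
    have hr : IsRun (revTrans T e).toTwoWayAut w (fun n => (cs n).1)
        (fun n => ((cs n).1.1, lett w (cs (n + 1)).1, (cs (n + 1)).1.1)) :=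
      ⟨rfl, fun n => stp_stepVia T e w (hcs n)⟩
    obtain ⟨h0, h1, h2⟩ := run_equiv T e he hdet w _ _ hr hal (fun n => (cs n).2)
    exact ⟨_, _, hr, h0, h1.2 hpar, (h2 x).2 hout⟩

end Machine

end Paper

namespace Paper

/-- Every one-way deterministic parity transducer `T` with `n` states is
equivalent to a reversible two-way parity transducer `T'` with at most `4n²` states. -/
theorem odbt_to_rbt (A B : Type) [Fintype A] [Fintype B]
    (T : OnewayTrans A B) (n : ℕ)
    (hdet : OnewayDet T.toOnewayAut) (hn : Fintype.card T.Q = n) :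
    ∃ T' : TwoWayTrans A B,
      Reversible T'.toTwoWayAut ∧
      Fintype.card T'.Q ≤ 4 * n ^ 2 ∧
      (∀ w x, T'.Realizes w x ↔ T.Realizes w x) := by
  classical
  let e : T.Q → ℤ := fun q => ((Fintype.equivFin T.Q q : ℕ) : ℤ)
  have he : Function.Injective e := by
    intro p q h
    have h' : ((Fintype.equivFin T.Q p : ℕ) : ℤ) = ((Fintype.equivFin T.Q q : ℕ) : ℤ) := h
    exact (Fintype.equivFin T.Q).injective (Fin.ext (by exact_mod_cast h'))
  refine ⟨revTrans T e, ⟨?_, ?_⟩, ?_, fun w x => revTrans_realizes T e he hdet w x⟩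
  · intro p a q q' h h'
    exact RevTr.det he hdet h h'
  · intro p p' a q h h'
    exact RevTr.codet he hdet h h'
  · have hcard : Fintype.card (revTrans T e).Q =
        Fintype.card ((T.Q × Bool) × (T.Q × Bool)) := rfl
    rw [hcard]
    simp only [Fintype.card_prod, Fintype.card_bool, hn]
    apply le_of_eq
    ring

end Paper
end
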